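/- Let the setting be type A_N or type B_N, let (i_t,k_t), 1 ≤ t ≤ T, be a snake, let (j_r,ℓ_r), 1 ≤ r ≤ R, be a sequence of R ≥ 0 points of W, and let (p_1,…,p_T) and (p′_1,…,p′_T) be non-overlapping tuples in P̄_{(i_t,k_t)}. Then the following are equivalent: (i) ∏_{t=1}^T m(p′_t) = ∏_{t=1}^T m(p_t) · ∏_{r=1}^R A_{j_r,ℓ_r}⁻¹ in the free abelian group M; (ii) there is a permutation σ of {1,…,R} such that lowering moves at (j_{σ(1)},ℓ_{σ(1)}), …, (j_{σ(R)},ℓ_{σ(R)}), performed in this order starting from (p_1,…,p_T), are all defined, every intermediate tuple is non-overlapping, and the final tuple is (p′_1,…,p′_T). -/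

import Mathlib

namespace Paper

/-- The ambient setting: type `A N` (with `N ≥ 1`) or type `B N ε`
(with `N ≥ 2` and `0 < ε < 1/2`). -/
inductive Setting where
  | A (N : ℕ)
  | B (N : ℕ) (ε : ℝ)

namespace Setting

/-- The rank `N`. -/
def N : Setting → ℕ
  | A n => n
  | B n _ => n

/-- Validity of the parameters of the setting. -/
def valid : Setting → Prop
  | A n => 1 ≤ n
  | B n ε => 2 ≤ n ∧ 0 < ε ∧ ε < 1 / 2

end Setting

/-- The numbers `r_i` : in type A all equal `1`; in type B, `r_N = 1` and `r_i = 2` for `i < N`. -/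
def rr : Setting → ℕ → ℕ
  | .A _, _ => 1
  | .B n _, j => if j = n then 1 else 2

/-- The set `X` in type `A_N`. -/
def XA (n : ℕ) : Set (ℕ × ℤ) :=
  {ik | 1 ≤ ik.1 ∧ ik.1 ≤ n ∧ ((ik.1 : ℤ) - ik.2) % 2 = 1}

/-- The set `X` in type `B_N`. -/
def XB (n : ℕ) : Set (ℕ × ℤ) :=
  {ik | (ik.1 = n ∧ ik.2 % 2 = 1) ∨ (1 ≤ ik.1 ∧ ik.1 < n ∧ ik.2 % 2 = 0)}

/-- The set `X ⊆ I × ℤ`. -/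
def X : Setting → Set (ℕ × ℤ)
  | .A n => XA n
  | .B n _ => XB n

/-- The set `W = {(i,k) : (i, k - r_i) ∈ X}`. -/
def W (S : Setting) : Set (ℕ × ℤ) :=
  {ik | (ik.1, ik.2 - (rr S ik.1 : ℤ)) ∈ X S}

/-- The `r`-th point of a path (a finite list of points of the plane). -/
def pt (p : List (ℝ × ℝ)) (r : ℕ) : ℝ × ℝ := p.getD r (0, 0)

/-- The set of paths `𝒫_{i,k}` in type `A_N`. -/
def pathsA (n : ℕ) (i : ℕ) (k : ℤ) : Set (List (ℝ × ℝ)) :=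
  {p | p.length = n + 2 ∧
    (∀ r, r < n + 2 → (pt p r).1 = (r : ℝ)) ∧
    (pt p 0).2 = (i : ℝ) + (k : ℝ) ∧
    (pt p (n + 1)).2 = (n : ℝ) + 1 - (i : ℝ) + (k : ℝ) ∧
    (∀ r, r ≤ n → (pt p (r + 1)).2 - (pt p r).2 = 1 ∨ (pt p (r + 1)).2 - (pt p r).2 = -1)}

/-- The set of paths `𝒫_{N,ℓ}` in type `B_N`. -/
def pathsBspin (n : ℕ) (ε : ℝ) (l : ℤ) : Set (List (ℝ × ℝ)) :=
  {p | p.length = n + 1 ∧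
    (if l % 4 = 3 then ∀ r, r < n → (pt p r).1 = 2 * (r : ℝ)
     else ∀ r, r < n → (pt p r).1 = 4 * (n : ℝ) - 2 - 2 * (r : ℝ)) ∧
    (pt p n).1 = 2 * (n : ℝ) - 1 ∧
    (pt p 0).2 = (l : ℝ) + 2 * (n : ℝ) - 1 ∧
    (∀ r, r + 2 ≤ n → (pt p (r + 1)).2 - (pt p r).2 = 2 ∨ (pt p (r + 1)).2 - (pt p r).2 = -2) ∧
    ((pt p n).2 - (pt p (n - 1)).2 = 1 + ε ∨ (pt p n).2 - (pt p (n - 1)).2 = -(1 + ε))}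

/-- The set of paths `𝒫_{i,k}` in type `B_N`. -/
def pathsB (n : ℕ) (ε : ℝ) (i : ℕ) (k : ℤ) : Set (List (ℝ × ℝ)) :=
  if i = n then pathsBspin n ε k
  else {p | ∃ a b : List (ℝ × ℝ),
    a ∈ pathsBspin n ε (k - (2 * (n : ℤ) - 2 * (i : ℤ) - 1)) ∧
    b ∈ pathsBspin n ε (k + (2 * (n : ℤ) - 2 * (i : ℤ) - 1)) ∧
    p = a ++ b.reverse ∧
    (pt a n).1 = (pt b n).1 ∧ 0 < (pt a n).2 - (pt b n).2}

/-- The set of paths `𝒫_{i,k}`. -/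
def P : Setting → ℕ → ℤ → Set (List (ℝ × ℝ))
  | .A n => pathsA n
  | .B n ε => pathsB n ε

/-- The map `ι : X → ℤ × ℤ` of type `B_N`. -/
def iotaB (n : ℕ) (ik : ℕ × ℤ) : ℤ × ℤ :=
  if ik.1 = n then (2 * (n : ℤ) - 1, ik.2)
  else if (2 * (n : ℤ) + ik.2 - 2 * (ik.1 : ℤ)) % 4 = 2 then (2 * (ik.1 : ℤ), ik.2)
  else (4 * (n : ℤ) - 2 - 2 * (ik.1 : ℤ), ik.2)

/-- The corners of a path: `Cp S p true` is the set `C_{p,+}` of upper corners, and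
`Cp S p false` is the set `C_{p,-}` of lower corners. -/
def Cp (S : Setting) (p : List (ℝ × ℝ)) (up : Bool) : Set (ℕ × ℤ) :=
  match S with
  | .A n =>
    {jl | 1 ≤ jl.1 ∧ jl.1 ≤ n ∧
      pt p jl.1 = ((jl.1 : ℝ), (jl.2 : ℝ)) ∧
      (pt p (jl.1 - 1)).2 = (jl.2 : ℝ) + (if up then 1 else -1) ∧
      (pt p (jl.1 + 1)).2 = (jl.2 : ℝ) + (if up then 1 else -1)}
  | .B n ε =>
    {jl | jl ∈ XB n ∧
      ((∃ r : ℕ, 1 ≤ r ∧ r + 1 < p.length ∧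
          pt p r = (((iotaB n jl).1 : ℝ), ((iotaB n jl).2 : ℝ)) ∧
          (iotaB n jl).1 ≠ 0 ∧ (iotaB n jl).1 ≠ 2 * (n : ℤ) - 1 ∧
          (iotaB n jl).1 ≠ 4 * (n : ℤ) - 2 ∧
          (if up then (pt p r).2 < (pt p (r - 1)).2 ∧ (pt p r).2 < (pt p (r + 1)).2
           else (pt p (r - 1)).2 < (pt p r).2 ∧ (pt p (r + 1)).2 < (pt p r).2))
       ∨ (jl.1 = n ∧
          (if up then (2 * (n : ℝ) - 1, (jl.2 : ℝ) - ε) ∈ p ∧ (2 * (n : ℝ) - 1, (jl.2 : ℝ) + ε) ∉ p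
           else (2 * (n : ℝ) - 1, (jl.2 : ℝ) + ε) ∈ p ∧ (2 * (n : ℝ) - 1, (jl.2 : ℝ) - ε) ∉ p)))}

/-- `p'` is obtained from `p` by replacing the point `q` by the point `q'`. -/
def Replace1 (p p' : List (ℝ × ℝ)) (q q' : ℝ × ℝ) : Prop :=
  ∃ r : ℕ, r < p.length ∧ pt p r = q ∧ p'.length = p.length ∧ pt p' r = q' ∧
    ∀ s, s < p.length → s ≠ r → pt p' s = pt p s

/-- `p'` is obtained from `p` by replacing the point `q1` by `q1'` and the point `q2` by `q2'`. -/
def Replace2 (p p' : List (ℝ × ℝ)) (q1 q1' q2 q2' : ℝ × ℝ) : Prop :=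
  ∃ r s : ℕ, r < p.length ∧ s < p.length ∧ r ≠ s ∧ pt p r = q1 ∧ pt p s = q2 ∧
    p'.length = p.length ∧ pt p' r = q1' ∧ pt p' s = q2' ∧
    ∀ u, u < p.length → u ≠ r → u ≠ s → pt p' u = pt p u

/-- The path `p` can be lowered at `(j, l)`: `(j, l - r_j) ∈ C_{p,+}` and
`(j, l + r_j) ∉ C_{p,+}`. -/
def CanLower (S : Setting) (p : List (ℝ × ℝ)) (j : ℕ) (l : ℤ) : Prop :=
  (j, l - (rr S j : ℤ)) ∈ Cp S p true ∧ (j, l + (rr S j : ℤ)) ∉ Cp S p true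

/-- `p'` is the result of the lowering move at `(j,l)` applied to the path `p ∈ 𝒫_{i,k}`;
written `p' = p 𝒜_{j,l}⁻¹`. -/
def LoweredTo (S : Setting) (i : ℕ) (k : ℤ) (j : ℕ) (l : ℤ)
    (p p' : List (ℝ × ℝ)) : Prop :=
  p ∈ P S i k ∧ p' ∈ P S i k ∧ CanLower S p j l ∧
  (match S with
   | .A _ => Replace1 p p' ((j : ℝ), (l : ℝ) - 1) ((j : ℝ), (l : ℝ) + 1)
   | .B n ε =>
     if j = n then
       Replace1 p p' (2 * (n : ℝ) - 1, (l : ℝ) - 1 - ε) (2 * (n : ℝ) - 1, (l : ℝ) + 1 + ε)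
     else if j = n - 1 then
       Replace2 p p'
         (((iotaB n (j, l - 2)).1 : ℝ), (l : ℝ) - 2) (((iotaB n (j, l - 2)).1 : ℝ), (l : ℝ) + 2)
         (2 * (n : ℝ) - 1, (l : ℝ) - 1 + ε) (2 * (n : ℝ) - 1, (l : ℝ) + 1 - ε)
     else
       Replace1 p p'
         (((iotaB n (j, l - 2)).1 : ℝ), (l : ℝ) - 2) (((iotaB n (j, l - 2)).1 : ℝ), (l : ℝ) + 2))

/-- The path `p` can be raised at `(j,l)`: it is of the form `p' 𝒜_{j,l}⁻¹`. -/
def CanRaise (S : Setting) (i : ℕ) (k : ℤ) (p : List (ℝ × ℝ)) (j : ℕ) (l : ℤ) : Prop :=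
  ∃ p', LoweredTo S i k j l p' p

/-- The monomial group `ℳ`, realised as exponent functions: the free abelian group on the
symbols `Y_{i,k}`, `(i,k) ∈ X`, is identified with finitely supported functions `(ℕ × ℤ) → ℤ`,
written additively. -/
def Y (x : ℕ × ℤ) : (ℕ × ℤ) → ℤ := fun z => if z = x then 1 else 0

noncomputable def ind (s : Prop) : ℤ := @ite ℤ s (Classical.propDecidable s) 1 0

/-- The monomial `m(p)` of a path: `∏ Y_{j,l}` over upper corners times `∏ Y_{j,l}⁻¹`
over lower corners. -/
noncomputable def mon (S : Setting) (p : List (ℝ × ℝ)) : (ℕ × ℤ) → ℤ :=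
  fun x => ind (x ∈ Cp S p true) - ind (x ∈ Cp S p false)

/-- The monomials `A_{j,l}`, with the conventions `Y_{0,·} = Y_{N+1,·} = 1`. -/
def Amon (S : Setting) (j : ℕ) (l : ℤ) : (ℕ × ℤ) → ℤ :=
  match S with
  | .A n =>
      Y (j, l + 1) + Y (j, l - 1) - (if j = 1 then 0 else Y (j - 1, l))
        - (if j = n then 0 else Y (j + 1, l))
  | .B n _ =>
      if j = n then Y (n, l + 1) + Y (n, l - 1) - Y (n - 1, l)
      else if j = n - 1 then
        Y (n - 1, l + 2) + Y (n - 1, l - 2) - (if j = 1 then 0 else Y (n - 2, l))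
          - Y (n, l + 1) - Y (n, l - 1)
      else
        Y (j, l + 2) + Y (j, l - 2) - (if j = 1 then 0 else Y (j - 1, l)) - Y (j + 1, l)

/-- A monomial is dominant iff all its exponents are nonnegative. -/
def Dominant (m : (ℕ × ℤ) → ℤ) : Prop := ∀ x, 0 ≤ m x

/-- A monomial is anti-dominant iff all its exponents are nonpositive. -/
def AntiDominant (m : (ℕ × ℤ) → ℤ) : Prop := ∀ x, m x ≤ 0

/-- `(i',k')` is in snake position with respect to `(i,k)`. -/
def SnakePos : Setting → ℕ × ℤ → ℕ × ℤ → Prop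
  | .A _, ik, ik' => |(ik'.1 : ℤ) - (ik.1 : ℤ)| + 2 ≤ ik'.2 - ik.2
  | .B n _, ik, ik' =>
      if ik.1 = n ∧ ik'.1 = n then
        2 ≤ ik'.2 - ik.2 ∧ (ik'.2 - ik.2) % 4 = 2
      else if ik.1 = n ∨ ik'.1 = n then
        2 * |(ik'.1 : ℤ) - (ik.1 : ℤ)| + 3 ≤ ik'.2 - ik.2 ∧
          (ik'.2 - ik.2) % 4 = (2 * |(ik'.1 : ℤ) - (ik.1 : ℤ)| - 1) % 4
      else
        2 * |(ik'.1 : ℤ) - (ik.1 : ℤ)| + 4 ≤ ik'.2 - ik.2 ∧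
          (ik'.2 - ik.2) % 4 = (2 * |(ik'.1 : ℤ) - (ik.1 : ℤ)|) % 4

/-- A snake: a sequence of points of `X`, each in snake position w.r.t. the previous one. -/
def IsSnake (S : Setting) {T : ℕ} (w : Fin T → ℕ × ℤ) : Prop :=
  (∀ t, w t ∈ X S) ∧
  ∀ (t : Fin T) (h : (t : ℕ) + 1 < T), SnakePos S (w t) (w ⟨(t : ℕ) + 1, h⟩)

/-- `p` is strictly above `p'`. -/
def StrictlyAbove (p p' : List (ℝ × ℝ)) : Prop :=
  ∀ a ∈ p, ∀ b ∈ p', a.1 = b.1 → a.2 < b.2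

/-- A tuple of paths is non-overlapping. -/
def NonOverlapping {T : ℕ} (ps : Fin T → List (ℝ × ℝ)) : Prop :=
  ∀ s t : Fin T, s < t → StrictlyAbove (ps s) (ps t)

/-- The set `𝒫̄` of non-overlapping tuples of paths attached to a snake. -/
def PBar (S : Setting) {T : ℕ} (w : Fin T → ℕ × ℤ) : Set (Fin T → List (ℝ × ℝ)) :=
  {ps | (∀ t, ps t ∈ P S (w t).1 (w t).2) ∧ NonOverlapping ps}

/-- The product `∏_t m(p_t)` of the monomials of a tuple of paths. -/
noncomputable def tmon (S : Setting) {T : ℕ} (ps : Fin T → List (ℝ × ℝ)) : (ℕ × ℤ) → ℤ :=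
  ∑ t, mon S (ps t)

/-- Lowering move at `jl` on a tuple of paths: one component is lowered, the others
are unchanged. -/
def TLoweredTo (S : Setting) {T : ℕ} (w : Fin T → ℕ × ℤ) (jl : ℕ × ℤ)
    (ps ps' : Fin T → List (ℝ × ℝ)) : Prop :=
  ∃ t, LoweredTo S (w t).1 (w t).2 jl.1 jl.2 (ps t) (ps' t) ∧ ∀ s, s ≠ t → ps' s = ps s

/-- Sequences of raising/lowering moves on a single path; the list records, for each move,
whether it was a lowering move (`true`) or a raising move (`false`), and its site. -/
inductive MoveSeq (S : Setting) (i : ℕ) (k : ℤ) :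
    List (ℝ × ℝ) → List (ℝ × ℝ) → List (Bool × (ℕ × ℤ)) → Prop where
  | nil (p : List (ℝ × ℝ)) : MoveSeq S i k p p []
  | lower {p q r : List (ℝ × ℝ)} {jl : ℕ × ℤ} {ms : List (Bool × (ℕ × ℤ))} :
      jl ∈ W S → LoweredTo S i k jl.1 jl.2 p q → MoveSeq S i k q r ms →
      MoveSeq S i k p r ((true, jl) :: ms)
  | raise {p q r : List (ℝ × ℝ)} {jl : ℕ × ℤ} {ms : List (Bool × (ℕ × ℤ))} :
      jl ∈ W S → LoweredTo S i k jl.1 jl.2 q p → MoveSeq S i k q r ms →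
      MoveSeq S i k p r ((false, jl) :: ms)

/-- Sequences of raising/lowering moves on tuples of paths, all of whose intermediate
tuples are non-overlapping. -/
inductive TMoveSeq (S : Setting) {T : ℕ} (w : Fin T → ℕ × ℤ) :
    (Fin T → List (ℝ × ℝ)) → (Fin T → List (ℝ × ℝ)) → List (Bool × (ℕ × ℤ)) → Prop where
  | nil (ps : Fin T → List (ℝ × ℝ)) : TMoveSeq S w ps ps []
  | lower {ps qs rs : Fin T → List (ℝ × ℝ)} {jl : ℕ × ℤ} {ms : List (Bool × (ℕ × ℤ))} :
      jl ∈ W S → TLoweredTo S w jl ps qs → NonOverlapping qs →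
      TMoveSeq S w qs rs ms → TMoveSeq S w ps rs ((true, jl) :: ms)
  | raise {ps qs rs : Fin T → List (ℝ × ℝ)} {jl : ℕ × ℤ} {ms : List (Bool × (ℕ × ℤ))} :
      jl ∈ W S → TLoweredTo S w jl qs ps → NonOverlapping qs →
      TMoveSeq S w qs rs ms → TMoveSeq S w ps rs ((false, jl) :: ms)

/-- Sequences of lowering moves on tuples of paths, all of whose intermediate tuples
are non-overlapping; the list records the sites, in order. -/
inductive TLowerSeq (S : Setting) {T : ℕ} (w : Fin T → ℕ × ℤ) :
    (Fin T → List (ℝ × ℝ)) → (Fin T → List (ℝ × ℝ)) → List (ℕ × ℤ) → Prop where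
  | nil (ps : Fin T → List (ℝ × ℝ)) : TLowerSeq S w ps ps []
  | cons {ps qs rs : Fin T → List (ℝ × ℝ)} {jl : ℕ × ℤ} {ms : List (ℕ × ℤ)} :
      jl ∈ W S → TLoweredTo S w jl ps qs → NonOverlapping qs →
      TLowerSeq S w qs rs ms → TLowerSeq S w ps rs (jl :: ms)

/-- Weak order on paths with the same x-coordinates: `p` is weakly above `p'`. -/
def WeaklyAbove (p p' : List (ℝ × ℝ)) : Prop :=
  p.length = p'.length ∧ ∀ r, r < p.length → (pt p r).2 ≤ (pt p' r).2

/-- `p` is weakly below `p'`. -/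
def WeaklyBelow (p p' : List (ℝ × ℝ)) : Prop :=
  p.length = p'.length ∧ ∀ r, r < p.length → (pt p' r).2 ≤ (pt p r).2

/-- The path `top(p, p')`. -/
def topPath (p p' : List (ℝ × ℝ)) : List (ℝ × ℝ) :=
  List.zipWith (fun a b => (a.1, min a.2 b.2)) p p'

/-- The distinguished point contained in the highest path `p⁺_{i,k}`. -/
def highPoint : Setting → ℕ → ℤ → ℝ × ℝ
  | .A _, i, k => ((i : ℝ), (k : ℝ))
  | .B n ε, i, k =>
      if i = n then (2 * (n : ℝ) - 1, (k : ℝ) - ε)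
      else (((iotaB n (i, k)).1 : ℝ), ((iotaB n (i, k)).2 : ℝ))

/-- The distinguished point contained in the lowest path `p⁻_{i,k}`. -/
def lowPoint : Setting → ℕ → ℤ → ℝ × ℝ
  | .A n, i, k => ((n : ℝ) + 1 - (i : ℝ), (k : ℝ) + (n : ℝ) + 1)
  | .B n ε, i, k =>
      if i = n then (2 * (n : ℝ) - 1, (k : ℝ) + 4 * (n : ℝ) - 2 + ε)
      else (((iotaB n (i, k + 4 * (n : ℤ) - 2)).1 : ℝ),
            ((iotaB n (i, k + 4 * (n : ℤ) - 2)).2 : ℝ))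

/-- The highest path `p⁺_{i,k}` : the path of `𝒫_{i,k}` with no lower corners. -/
noncomputable def highestPath (S : Setting) (i : ℕ) (k : ℤ) : List (ℝ × ℝ) :=
  Classical.epsilon fun p => p ∈ P S i k ∧ Cp S p false = ∅

/-- The lowest path `p⁻_{i,k}` : the path of `𝒫_{i,k}` with no upper corners. -/
noncomputable def lowestPath (S : Setting) (i : ℕ) (k : ℤ) : List (ℝ × ℝ) :=
  Classical.epsilon fun p => p ∈ P S i k ∧ Cp S p true = ∅


/-!
The height function of a tuple of paths counts, for every `x ∈ W`, the points of the tuple lying on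
the vertical line of `x`, strictly above `x`. If `L` denotes the additive extension of `Y_x ↦ A_x`,
the monomial of a tuple is the image under `L` of its height function, and a lowering move at `x`
subtracts `Y_x` from the height function. Since `L` is triangular, it is injective on functions
supported in `W` which vanish at points of small second coordinate. Hence the equation of monomials
says that the height functions of the two tuples differ by `∑ r, Y_{(j_r, ℓ_r)}`.

As the paths do not overlap, the inequality of height functions holds path by path: every path of
the first tuple lies weakly above its counterpart. If the tuples differ, take the last path which
differs from its counterpart, and in it an upper corner of minimal second coordinate among those
that have to move. It can be lowered without meeting the next path or passing its counterpart, and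
the induction on `R` goes on. In type B a path consists of one or two halves, and the lowest half
that differs is the one which is lowered.
-/

theorem ind_true {s : Prop} (h : s) : ind s = 1 := by
  simp only [ind, if_pos h]

theorem ind_false {s : Prop} (h : ¬s) : ind s = 0 := by
  simp only [ind, if_neg h]

theorem ind_nonneg (s : Prop) : 0 ≤ ind s := by
  by_cases h : s <;> simp [ind, h]

theorem ind_congr {s t : Prop} (h : s ↔ t) : ind s = ind t := by
  rw [propext h]

theorem ind_mono {s t : Prop} (h : s → t) : ind s ≤ ind t := by
  by_cases hs : s
  · rw [ind_true hs, ind_true (h hs)]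
  · rw [ind_false hs]
    exact ind_nonneg t

theorem Y_nonneg (x z : ℕ × ℤ) : 0 ≤ Y x z := by
  unfold Y
  split_ifs <;> norm_num

theorem Y_self (x : ℕ × ℤ) : Y x x = 1 := if_pos rfl

theorem Y_of_ne {x z : ℕ × ℤ} (h : z ≠ x) : Y x z = 0 := if_neg h

theorem pt_mem {p : List (ℝ × ℝ)} {r : ℕ} (h : r < p.length) : pt p r ∈ p := by
  rw [pt, List.getD_eq_getElem _ _ h]
  exact List.getElem_mem h

theorem exists_pt_eq {p : List (ℝ × ℝ)} {a : ℝ × ℝ} (h : a ∈ p) : ∃ r < p.length, pt p r = a := by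
  obtain ⟨r, hr, rfl⟩ := List.mem_iff_getElem.1 h
  exact ⟨r, hr, List.getD_eq_getElem _ _ hr⟩

theorem ext_pt {p q : List (ℝ × ℝ)} (hlen : p.length = q.length)
    (h : ∀ r < p.length, pt p r = pt q r) : p = q := by
  refine List.ext_getElem hlen fun r hp hq => ?_
  simpa only [pt, List.getD_eq_getElem _ _ hp, List.getD_eq_getElem _ _ hq] using h r hp

theorem pt_map_range {m r : ℕ} (g : ℕ → ℝ × ℝ) (h : r < m) :
    pt ((List.range m).map g) r = g r := by
  rw [pt, List.getD_eq_getElem _ _ (by simpa using h)]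
  simp

theorem sum_map_eq_sum_range_pt (g : ℝ × ℝ → ℤ) (p : List (ℝ × ℝ)) :
    (p.map g).sum = ∑ r ∈ Finset.range p.length, g (pt p r) := by
  induction p with
  | nil => simp
  | cons a p ih =>
    rw [List.map_cons, List.sum_cons, List.length_cons, Finset.sum_range_succ', ih, add_comm]
    rfl

theorem Replace1.sum_map {p p' : List (ℝ × ℝ)} {q q' : ℝ × ℝ} (h : Replace1 p p' q q')
    (g : ℝ × ℝ → ℤ) : (p'.map g).sum - (p.map g).sum = g q' - g q := by
  obtain ⟨r, hr, rfl, hlen, rfl, hrest⟩ := h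
  rw [sum_map_eq_sum_range_pt, sum_map_eq_sum_range_pt, hlen, ← Finset.sum_sub_distrib]
  refine Finset.sum_eq_single_of_mem r (Finset.mem_range.2 hr) fun s hs hsr => ?_
  rw [hrest s (Finset.mem_range.1 hs) hsr, sub_self]

theorem Replace2.sum_map {p p' : List (ℝ × ℝ)} {q₁ q₁' q₂ q₂' : ℝ × ℝ}
    (h : Replace2 p p' q₁ q₁' q₂ q₂') (g : ℝ × ℝ → ℤ) :
    (p'.map g).sum - (p.map g).sum = (g q₁' - g q₁) + (g q₂' - g q₂) := by
  obtain ⟨r, s, hr, hs, hrs, rfl, rfl, hlen, rfl, rfl, hrest⟩ := h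
  rw [sum_map_eq_sum_range_pt, sum_map_eq_sum_range_pt, hlen, ← Finset.sum_sub_distrib]
  refine Finset.sum_eq_add_of_mem r s (Finset.mem_range.2 hr) (Finset.mem_range.2 hs) hrs
    fun u hu hne => ?_
  rw [hrest u (Finset.mem_range.1 hu) hne.1 hne.2, sub_self]

/-- The subgroup of the functions on sites that vanish where the second coordinate is small enough;
it is the domain on which `Y_x ↦ A_x` is shown to be injective. -/
def lowBounded : AddSubgroup ((ℕ × ℤ) → ℤ) where
  carrier := {v | ∃ b : ℤ, ∀ x : ℕ × ℤ, x.2 < b → v x = 0}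
  zero_mem' := ⟨0, fun _ _ => rfl⟩
  add_mem' := by
    rintro v v' ⟨b, hb⟩ ⟨b', hb'⟩
    refine ⟨min b b', fun x hx => ?_⟩
    rw [Pi.add_apply, hb x (hx.trans_le (min_le_left _ _)),
      hb' x (hx.trans_le (min_le_right _ _)), add_zero]
  neg_mem' := by
    rintro v ⟨b, hb⟩
    exact ⟨b, fun x hx => by rw [Pi.neg_apply, hb x hx, neg_zero]⟩

theorem Y_mem_lowBounded (x : ℕ × ℤ) : Y x ∈ lowBounded :=
  ⟨x.2, fun z hz => Y_of_ne fun h => by rw [h] at hz; exact lt_irrefl _ hz⟩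

/-- The height function of a path: at a site `x`, the number of points of the path that lie on the
vertical line of `x` and strictly above `x`. The relation `onLine a x` says that the point `a` lies
on the vertical line of `x`; recall that upper points have smaller second coordinates. -/
noncomputable def height (onLine : ℝ × ℝ → ℕ × ℤ → Prop) (p : List (ℝ × ℝ)) (x : ℕ × ℤ) : ℤ :=
  (p.map fun a => ind (onLine a x ∧ a.2 < (x.2 : ℝ))).sum

/-- The number of points of a path on the vertical line of a site, an upper bound of the height. -/
noncomputable def lineCount (onLine : ℝ × ℝ → ℕ × ℤ → Prop) (p : List (ℝ × ℝ)) (x : ℕ × ℤ) : ℤ :=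
  (p.map fun a => ind (onLine a x)).sum

section Height

variable {onLine : ℝ × ℝ → ℕ × ℤ → Prop}

theorem height_nonneg (p : List (ℝ × ℝ)) (x : ℕ × ℤ) : 0 ≤ height onLine p x :=
  List.sum_nonneg fun y hy => by
    obtain ⟨a, -, rfl⟩ := List.mem_map.1 hy
    exact ind_nonneg _

theorem height_le_lineCount (p : List (ℝ × ℝ)) (x : ℕ × ℤ) :
    height onLine p x ≤ lineCount onLine p x :=
  List.sum_le_sum fun _ _ => ind_mono And.left

theorem height_append (p q : List (ℝ × ℝ)) (x : ℕ × ℤ) :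
    height onLine (p ++ q) x = height onLine p x + height onLine q x := by
  rw [height, List.map_append, List.sum_append, ← height, ← height]

theorem height_mem_lowBounded (p : List (ℝ × ℝ)) : height onLine p ∈ lowBounded := by
  induction p with
  | nil => exact zero_mem lowBounded
  | cons a p ih =>
    have hsingle : height onLine [a] ∈ lowBounded := ⟨⌊a.2⌋, fun z hz => by
      have hza : (z.2 : ℝ) ≤ a.2 := (Int.cast_le.2 hz.le).trans (Int.floor_le _)
      simp [height, ind_false fun h : onLine a z ∧ a.2 < (z.2 : ℝ) => h.2.not_ge hza]⟩
    have hsum : height onLine (a :: p) = height onLine [a] + height onLine p :=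
      funext (height_append [a] p)
    exact hsum ▸ add_mem hsingle ih

theorem height_eq_lineCount_of_strictlyAbove {p q : List (ℝ × ℝ)} {x : ℕ × ℤ}
    (hcol : ∀ a b, onLine a x → onLine b x → a.1 = b.1) (h : StrictlyAbove p q)
    (hq : 0 < height onLine q x) : height onLine p x = lineCount onLine p x := by
  obtain ⟨b, hb, hbx, hlt⟩ : ∃ b ∈ q, onLine b x ∧ b.2 < (x.2 : ℝ) := by
    by_contra! hno
    refine hq.ne' (List.sum_eq_zero fun y hy => ?_)
    obtain ⟨b, hb, rfl⟩ := List.mem_map.1 hy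
    exact ind_false fun hbx => (hno b hb hbx.1).not_gt hbx.2
  refine congrArg List.sum (List.map_congr_left fun a ha => ind_congr ⟨And.left, fun hax => ?_⟩)
  exact ⟨hax, (h a ha b hb (hcol a b hax hbx)).trans hlt⟩

end Height

theorem sum_ind_eq_ind_exists {α : Type*} [Fintype α] {s : α → Prop}
    (h : ∀ a b, s a → s b → a = b) : ∑ a, ind (s a) = ind (∃ a, s a) := by
  by_cases hs : ∃ a, s a
  · obtain ⟨a, ha⟩ := hs
    rw [ind_true ⟨a, ha⟩,
      Fintype.sum_eq_single a fun b hb => ind_false fun hb' => hb (h b a hb' ha), ind_true ha]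
  · rw [ind_false hs]
    exact Finset.sum_eq_zero fun a _ => ind_false fun ha => hs ⟨a, ha⟩

theorem pt_append_left {p q : List (ℝ × ℝ)} {r : ℕ} (hr : r < p.length) :
    pt (p ++ q) r = pt p r :=
  List.getD_append _ _ _ _ hr

theorem pt_append_reverse {p q : List (ℝ × ℝ)} {r : ℕ} (hr : r < q.length) :
    pt (p ++ q.reverse) (p.length + (q.length - 1 - r)) = pt q r := by
  rw [pt, List.getD_append_right _ _ _ _ (Nat.le_add_right _ _), Nat.add_sub_cancel_left,
    List.getD_reverse _ (by omega), pt]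
  congr 1
  omega

theorem WeaklyAbove.trans_strictlyAbove {p p' q : List (ℝ × ℝ)} (h : WeaklyAbove p p')
    (hcol : ∀ r < p.length, (pt p r).1 = (pt p' r).1) (h' : StrictlyAbove p' q) :
    StrictlyAbove p q := by
  intro a ha b hb hab
  obtain ⟨r, hr, rfl⟩ := exists_pt_eq ha
  exact (h.2 r hr).trans_lt (h' _ (pt_mem (h.1 ▸ hr)) b hb ((hcol r hr).symm.trans hab))

theorem StrictlyAbove.trans_weaklyAbove {p q q' : List (ℝ × ℝ)} (h : StrictlyAbove p q)
    (hcol : ∀ r < q.length, (pt q r).1 = (pt q' r).1) (h' : WeaklyAbove q q') :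
    StrictlyAbove p q' := by
  intro a ha b hb hab
  obtain ⟨r, hr, rfl⟩ := exists_pt_eq hb
  have hr : r < q.length := h'.1 ▸ hr
  exact (h a ha _ (pt_mem hr) (hab.trans (hcol r hr).symm)).trans_le (h'.2 r hr)

theorem update_mem_PBar {S : Setting} {T : ℕ} {w : Fin T → ℕ × ℤ} {ps : Fin T → List (ℝ × ℝ)}
    (hps : ps ∈ PBar S w) {t : Fin T} {q : List (ℝ × ℝ)} (hq : q ∈ P S (w t).1 (w t).2)
    (habove : ∀ s < t, StrictlyAbove (ps s) q) (hbelow : ∀ s, t < s → StrictlyAbove q (ps s)) :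
    Function.update ps t q ∈ PBar S w := by
  refine ⟨fun s => ?_, fun s u hsu => ?_⟩
  · obtain rfl | hst := eq_or_ne s t
    · rwa [Function.update_self]
    · rw [Function.update_of_ne hst]
      exact hps.1 s
  · obtain rfl | hst := eq_or_ne s t
    · rw [Function.update_self, Function.update_of_ne hsu.ne']
      exact hbelow u hsu
    · rw [Function.update_of_ne hst]
      obtain rfl | hut := eq_or_ne u t
      · rw [Function.update_self]
        exact habove s hsu
      · rw [Function.update_of_ne hut]
        exact hps.2 s u hsu

/-- What the argument needs to know about a setting. `onLine` is the incidence relation between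
points and sites used in height functions, and `toA` is the additive map `Y_x ↦ A_x`, extended to
functions of arbitrary support; the other fields say that `toA` recovers the monomial of a path from
its height function, that lowering moves decrease heights at their site only, and that paths with
the same end points are compared through their heights. -/
structure PathModel (S : Setting) where
  onLine : ℝ × ℝ → ℕ × ℤ → Prop
  toA : ((ℕ × ℤ) → ℤ) →+ ((ℕ × ℤ) → ℤ)
  fst_eq_of_onLine : ∀ {a b x}, onLine a x → onLine b x → a.1 = b.1
  toA_Y : ∀ x ∈ W S, toA (Y x) = Amon S x.1 x.2
  eq_zero_of_toA_eq_zero : ∀ v ∈ lowBounded, (∀ x ∉ W S, v x = 0) → toA v = 0 → v = 0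
  mon_eq : ∀ x ∈ X S, ∀ p ∈ P S x.1 x.2, mon S p = toA (height onLine p)
  height_lower : ∀ x ∈ X S, ∀ y ∈ W S, ∀ p q, LoweredTo S x.1 x.2 y.1 y.2 p q →
    height onLine q = height onLine p - Y y
  length_eq : ∀ x ∈ X S, ∀ p ∈ P S x.1 x.2, ∀ q ∈ P S x.1 x.2, p.length = q.length
  pt_fst_eq : ∀ x ∈ X S, ∀ p ∈ P S x.1 x.2, ∀ q ∈ P S x.1 x.2, ∀ r < p.length,
    (pt p r).1 = (pt q r).1
  onLine_pt : ∀ x ∈ X S, ∀ p ∈ P S x.1 x.2, ∀ q ∈ P S x.1 x.2, ∀ r < p.length, ∀ z,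
    onLine (pt p r) z → onLine (pt q r) z
  pt_eq_of_notMem_W : ∀ x ∈ X S, ∀ p ∈ P S x.1 x.2, ∀ q ∈ P S x.1 x.2, ∀ r < p.length, ∀ z ∉ W S,
    onLine (pt p r) z → pt p r = pt q r
  weaklyAbove_of_height_le : ∀ x ∈ X S, ∀ p ∈ P S x.1 x.2, ∀ q ∈ P S x.1 x.2,
    (∀ z, height onLine q z ≤ height onLine p z) → WeaklyAbove p q
  exists_lower : ∀ x ∈ X S, ∀ p ∈ P S x.1 x.2, ∀ q ∈ P S x.1 x.2, WeaklyAbove p q → p ≠ q →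
    ∃ y ∈ W S, ∃ p', LoweredTo S x.1 x.2 y.1 y.2 p p' ∧ WeaklyAbove p' q

namespace PathModel

variable {S : Setting} (M : PathModel S)

section Path

variable {x : ℕ × ℤ} (hx : x ∈ X S) {p q : List (ℝ × ℝ)} (hp : p ∈ P S x.1 x.2)
  (hq : q ∈ P S x.1 x.2)

include hx hp hq

theorem onLine_pt_iff {r : ℕ} (hr : r < p.length) (z : ℕ × ℤ) :
    M.onLine (pt p r) z ↔ M.onLine (pt q r) z :=
  ⟨M.onLine_pt x hx p hp q hq r hr z,
    M.onLine_pt x hx q hq p hp r (M.length_eq x hx p hp q hq ▸ hr) z⟩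

theorem height_anti (h : WeaklyAbove p q) (z : ℕ × ℤ) :
    height M.onLine q z ≤ height M.onLine p z := by
  rw [height, height, sum_map_eq_sum_range_pt, sum_map_eq_sum_range_pt, ← h.1]
  refine Finset.sum_le_sum fun r hr => ind_mono fun ⟨hline, hlt⟩ => ?_
  have hr := Finset.mem_range.1 hr
  exact ⟨(M.onLine_pt_iff hx hp hq hr z).2 hline, (h.2 r hr).trans_lt hlt⟩

theorem lineCount_eq (z : ℕ × ℤ) : lineCount M.onLine p z = lineCount M.onLine q z := by
  rw [lineCount, lineCount, sum_map_eq_sum_range_pt, sum_map_eq_sum_range_pt,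
    M.length_eq x hx p hp q hq]
  refine Finset.sum_congr rfl fun r hr => ind_congr (M.onLine_pt_iff hx hp hq ?_ z)
  exact M.length_eq x hx p hp q hq ▸ Finset.mem_range.1 hr

theorem height_eq_of_notMem_W {z : ℕ × ℤ} (hz : z ∉ W S) :
    height M.onLine p z = height M.onLine q z := by
  rw [height, height, sum_map_eq_sum_range_pt, sum_map_eq_sum_range_pt,
    ← M.length_eq x hx p hp q hq]
  refine Finset.sum_congr rfl fun r hr => ?_
  have hr := Finset.mem_range.1 hr
  by_cases hline : M.onLine (pt p r) z
  · rw [M.pt_eq_of_notMem_W x hx p hp q hq r hr z hz hline]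
  · have hline' := (M.onLine_pt_iff hx hp hq hr z).not.1 hline
    rw [ind_false fun h => hline h.1, ind_false fun h => hline' h.1]

end Path

variable {T : ℕ}

/-- The height function of a tuple of paths, the sum of the heights of its paths. -/
noncomputable def tupleHeight (ps : Fin T → List (ℝ × ℝ)) : (ℕ × ℤ) → ℤ :=
  ∑ t, height M.onLine (ps t)

theorem tupleHeight_apply (ps : Fin T → List (ℝ × ℝ)) (z : ℕ × ℤ) :
    M.tupleHeight ps z = ∑ t, height M.onLine (ps t) z :=
  Finset.sum_apply z _ _

theorem tupleHeight_update (ps : Fin T → List (ℝ × ℝ)) (t : Fin T) (q : List (ℝ × ℝ)) :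
    M.tupleHeight (Function.update ps t q) =
      M.tupleHeight ps + (height M.onLine q - height M.onLine (ps t)) := by
  rw [tupleHeight, tupleHeight, ← sub_eq_iff_eq_add', ← Finset.sum_sub_distrib,
    Finset.sum_eq_single_of_mem t (Finset.mem_univ t), Function.update_self]
  intro s _ hs
  rw [Function.update_of_ne hs, sub_self]

section Tuple

variable {w : Fin T → ℕ × ℤ} (hw : ∀ t, w t ∈ X S)

include hw

theorem tmon_eq {ps : Fin T → List (ℝ × ℝ)} (h : ∀ t, ps t ∈ P S (w t).1 (w t).2) :
    tmon S ps = M.toA (M.tupleHeight ps) := by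
  rw [tmon, tupleHeight, map_sum]
  exact Finset.sum_congr rfl fun t _ => M.mon_eq _ (hw t) _ (h t)

theorem tupleHeight_of_loweredTo {y : ℕ × ℤ} (hy : y ∈ W S) {ps qs : Fin T → List (ℝ × ℝ)}
    (h : TLoweredTo S w y ps qs) : M.tupleHeight qs = M.tupleHeight ps - Y y := by
  obtain ⟨t, hlow, hrest⟩ := h
  rw [Function.eq_update_iff.2 ⟨rfl, hrest⟩, tupleHeight_update,
    M.height_lower _ (hw t) y hy _ _ hlow]
  abel

theorem tupleHeight_of_lowerSeq {ps qs : Fin T → List (ℝ × ℝ)} {ms : List (ℕ × ℤ)}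
    (h : TLowerSeq S w ps qs ms) :
    M.tupleHeight qs = M.tupleHeight ps - (ms.map Y).sum := by
  induction h with
  | nil ps => simp
  | cons hy hlow _ _ ih =>
    rw [ih, M.tupleHeight_of_loweredTo hw hy hlow, List.map_cons, List.sum_cons, sub_sub]

variable {ps ps' : Fin T → List (ℝ × ℝ)} (hps : ps ∈ PBar S w) (hps' : ps' ∈ PBar S w)

include hps hps'

-- If a path of a non-overlapping tuple has positive height at `z`, then all paths above it have the
-- largest possible height there, so the total height at `z` determines the height of each path.
theorem height_le_of_tupleHeight_le {z : ℕ × ℤ} (hle : M.tupleHeight ps' z ≤ M.tupleHeight ps z)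
    (t : Fin T) : height M.onLine (ps' t) z ≤ height M.onLine (ps t) z := by
  by_contra! hlt
  rw [tupleHeight_apply, tupleHeight_apply] at hle
  refine hle.not_gt (Finset.sum_lt_sum (fun s _ => ?_) ⟨t, Finset.mem_univ t, hlt⟩)
  have hcount (s) : lineCount M.onLine (ps s) z = lineCount M.onLine (ps' s) z :=
    M.lineCount_eq (hw s) (hps.1 s) (hps'.1 s) z
  rcases lt_trichotomy s t with hst | rfl | hts
  · have hfull : height M.onLine (ps' s) z = lineCount M.onLine (ps' s) z :=
      height_eq_lineCount_of_strictlyAbove (fun _ _ => M.fst_eq_of_onLine) (hps'.2 s t hst)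
        ((height_nonneg _ _).trans_lt hlt)
    rw [hfull, ← hcount]
    exact height_le_lineCount _ _
  · exact hlt.le
  · have hzero : height M.onLine (ps s) z = 0 := by
      by_contra hne
      have hfull := height_eq_lineCount_of_strictlyAbove (fun _ _ => M.fst_eq_of_onLine)
        (hps.2 t s hts) (lt_of_le_of_ne (height_nonneg _ _) (Ne.symm hne))
      rw [hfull, hcount] at hlt
      exact hlt.not_ge (height_le_lineCount _ _)
    exact hzero ▸ height_nonneg _ _

theorem exists_tuple_lower (hle : ∀ z, M.tupleHeight ps' z ≤ M.tupleHeight ps z) (hne : ps ≠ ps') :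
    ∃ y ∈ W S, ∃ qs ∈ PBar S w, TLoweredTo S w y ps qs ∧
      ∀ z, M.tupleHeight ps' z ≤ M.tupleHeight qs z := by
  have hle (t) (z) := M.height_le_of_tupleHeight_le hw hps hps' (hle z) t
  have habove (t) : WeaklyAbove (ps t) (ps' t) :=
    M.weaklyAbove_of_height_le _ (hw t) _ (hps.1 t) _ (hps'.1 t) (hle t)
  obtain ⟨t, hpt, hmax⟩ : ∃ t, ps t ≠ ps' t ∧ ∀ s, t < s → ps s = ps' s := by
    obtain ⟨t, ht⟩ :=
      exists_maximal_of_wellFoundedGT (fun t => ps t ≠ ps' t) (Function.ne_iff.1 hne)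
    exact ⟨t, ht.prop, fun s hts => not_not.1 fun hs => ht.not_prop_of_gt hts hs⟩
  obtain ⟨y, hy, q, hlow, hq⟩ :=
    M.exists_lower _ (hw t) _ (hps.1 t) _ (hps'.1 t) (habove t) hpt
  have hqP := hlow.2.1
  have hpq : WeaklyAbove (ps t) q := by
    refine M.weaklyAbove_of_height_le _ (hw t) _ (hps.1 t) _ hqP fun z => ?_
    rw [M.height_lower _ (hw t) y hy _ _ hlow, Pi.sub_apply]
    exact sub_le_self _ (Y_nonneg y z)
  refine ⟨y, hy, Function.update ps t q,
    update_mem_PBar hps hqP (fun s hst => ?_) (fun s hts => ?_),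
    ⟨t, by rwa [Function.update_self], fun s hs => Function.update_of_ne hs _ _⟩, fun z => ?_⟩
  · exact (hps.2 s t hst).trans_weaklyAbove (M.pt_fst_eq _ (hw t) _ (hps.1 t) _ hqP) hpq
  · rw [hmax s hts]
    exact hq.trans_strictlyAbove (M.pt_fst_eq _ (hw t) _ hqP _ (hps'.1 t)) (hps'.2 t s hts)
  · rw [tupleHeight_apply, tupleHeight_apply]
    refine Finset.sum_le_sum fun s _ => ?_
    obtain rfl | hst := eq_or_ne s t
    · rw [Function.update_self]
      exact M.height_anti (hw s) hqP (hps'.1 s) hq z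
    · rw [Function.update_of_ne hst]
      exact hle s z

theorem eq_of_tupleHeight_eq (h : M.tupleHeight ps = M.tupleHeight ps') : ps = ps' := by
  by_contra hne
  obtain ⟨y, hy, qs, -, hlow, hle⟩ :=
    M.exists_tuple_lower hw hps hps' (fun z => (congrFun h z).ge) hne
  have hle := hle y
  rw [M.tupleHeight_of_loweredTo hw hy hlow, h, Pi.sub_apply, Y_self] at hle
  omega

end Tuple

theorem exists_lowerSeq {w : Fin T → ℕ × ℤ} (hw : ∀ t, w t ∈ X S) {ps' : Fin T → List (ℝ × ℝ)}
    (hps' : ps' ∈ PBar S w) {R : ℕ} (jl : Fin R → ℕ × ℤ) {ps : Fin T → List (ℝ × ℝ)}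
    (hps : ps ∈ PBar S w) (h : M.tupleHeight ps' = M.tupleHeight ps - ∑ r, Y (jl r)) :
    ∃ σ : Equiv.Perm (Fin R), TLowerSeq S w ps ps' (List.ofFn fun r => jl (σ r)) := by
  induction R generalizing ps with
  | zero =>
    have heq : ps = ps' := M.eq_of_tupleHeight_eq hw hps hps' (by simp [h])
    exact ⟨1, by simpa [heq] using TLowerSeq.nil ps'⟩
  | succ R ih =>
    have happly (z) : M.tupleHeight ps' z = M.tupleHeight ps z - ∑ r, Y (jl r) z := by
      rw [h, Pi.sub_apply, Finset.sum_apply]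
    have hnonneg (z) : 0 ≤ ∑ r, Y (jl r) z := Finset.sum_nonneg fun r _ => Y_nonneg _ _
    have hne : ps ≠ ps' := by
      rintro rfl
      have hle : Y (jl 0) (jl 0) ≤ ∑ r, Y (jl r) (jl 0) :=
        Finset.single_le_sum (fun r _ => Y_nonneg _ _) (Finset.mem_univ 0)
      rw [Y_self] at hle
      linarith [happly (jl 0)]
    obtain ⟨y, hy, qs, hqs, hlow, hle⟩ := M.exists_tuple_lower hw hps hps'
      (fun z => by linarith [happly z, hnonneg z]) hne
    have hqs_height := M.tupleHeight_of_loweredTo hw hy hlow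
    obtain ⟨r, rfl⟩ : ∃ r, jl r = y := by
      by_contra! hno
      have hzero : ∑ r, Y (jl r) y = 0 := Finset.sum_eq_zero fun r _ => Y_of_ne (hno r).symm
      have hle := hle y
      rw [hqs_height, Pi.sub_apply, Y_self] at hle
      linarith [happly y]
    have hsplit : ∑ s, Y (jl s) = Y (jl r) + ∑ s : Fin R, Y (jl (Equiv.swap 0 r s.succ)) := by
      rw [← Equiv.sum_comp (Equiv.swap 0 r), Fin.sum_univ_succ, Equiv.swap_apply_left]
    obtain ⟨σ, hσ⟩ := ih (fun s => jl (Equiv.swap 0 r s.succ)) hqs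
      (by rw [h, hqs_height, hsplit, sub_sub])
    refine ⟨Equiv.Perm.decomposeFin.symm (r, σ), ?_⟩
    simpa only [List.ofFn_succ, Equiv.Perm.decomposeFin_symm_apply_zero,
      Equiv.Perm.decomposeFin_symm_apply_succ] using TLowerSeq.cons hy hlow hqs.2 hσ

theorem tmon_eq_iff_tupleHeight_eq {w : Fin T → ℕ × ℤ} (hw : ∀ t, w t ∈ X S)
    {ps ps' : Fin T → List (ℝ × ℝ)} (hps : ps ∈ PBar S w) (hps' : ps' ∈ PBar S w) {R : ℕ}
    {jl : Fin R → ℕ × ℤ} (hjl : ∀ r, jl r ∈ W S) :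
    tmon S ps' = tmon S ps - ∑ r, Amon S (jl r).1 (jl r).2 ↔
      M.tupleHeight ps' = M.tupleHeight ps - ∑ r, Y (jl r) := by
  have hmap : tmon S ps' - (tmon S ps - ∑ r, Amon S (jl r).1 (jl r).2) =
      M.toA (M.tupleHeight ps' - (M.tupleHeight ps - ∑ r, Y (jl r))) := by
    rw [M.tmon_eq hw hps.1, M.tmon_eq hw hps'.1, map_sub, map_sub, map_sum,
      Finset.sum_congr rfl fun r _ => M.toA_Y _ (hjl r)]
  rw [← sub_eq_zero, hmap, ← sub_eq_zero (a := M.tupleHeight ps')]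
  refine ⟨M.eq_zero_of_toA_eq_zero _ ?_ fun x hx => ?_, fun h => by rw [h, map_zero]⟩
  · exact sub_mem (sum_mem fun t _ => height_mem_lowBounded _)
      (sub_mem (sum_mem fun t _ => height_mem_lowBounded _) (sum_mem fun r _ => Y_mem_lowBounded _))
  · have hY : ∑ r, Y (jl r) x = 0 :=
      Finset.sum_eq_zero fun r _ => Y_of_ne fun h => hx (h ▸ hjl r)
    have hheight : M.tupleHeight ps' x = M.tupleHeight ps x := by
      rw [tupleHeight_apply, tupleHeight_apply]
      exact Finset.sum_congr rfl fun t _ =>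
        M.height_eq_of_notMem_W (hw t) (hps'.1 t) (hps.1 t) hx
    rw [Pi.sub_apply, Pi.sub_apply, Finset.sum_apply, hY, hheight, sub_zero, sub_self]

include M in
theorem tmon_eq_iff_exists_lowerSeq {w : Fin T → ℕ × ℤ} (hw : ∀ t, w t ∈ X S)
    {ps ps' : Fin T → List (ℝ × ℝ)} (hps : ps ∈ PBar S w) (hps' : ps' ∈ PBar S w) {R : ℕ}
    {jl : Fin R → ℕ × ℤ} (hjl : ∀ r, jl r ∈ W S) :
    tmon S ps' = tmon S ps - ∑ r, Amon S (jl r).1 (jl r).2 ↔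
      ∃ σ : Equiv.Perm (Fin R), TLowerSeq S w ps ps' (List.ofFn fun r => jl (σ r)) := by
  rw [M.tmon_eq_iff_tupleHeight_eq hw hps hps' hjl]
  refine ⟨M.exists_lowerSeq hw hps' jl hps, fun ⟨σ, h⟩ => ?_⟩
  rw [M.tupleHeight_of_lowerSeq hw h, List.map_ofFn, List.sum_ofFn]
  exact congrArg _ (Equiv.sum_comp σ fun r => Y (jl r))

end PathModel

theorem eq_zero_of_rank {α : Type*} {v : α → ℤ} (rank : α → ℤ) {b : ℤ}
    (hb : ∀ x, rank x < b → v x = 0) (h : ∀ x, (∀ y, rank y < rank x → v y = 0) → v x = 0) :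
    v = 0 := by
  have hzero (m : ℕ) : ∀ x, rank x < b + m → v x = 0 := by
    induction m with
    | zero => simpa using hb
    | succ m ih => exact fun x hx => h x fun y hy => ih y (by omega)
  exact funext fun x => hzero (rank x - b + 1).toNat x (by omega)

theorem exists_lowest_lt {m : ℕ} {y z : ℕ → ℤ} (h : ∃ r < m, y r < z r) :
    ∃ r < m, y r < z r ∧ ∀ s < m, y s < z s → y r ≤ y s := by
  obtain ⟨r, hr, hlt⟩ := h
  obtain ⟨s, hs, hmin⟩ := ((Finset.range m).filter fun r => y r < z r).exists_min_image y
    ⟨r, Finset.mem_filter.2 ⟨Finset.mem_range.2 hr, hlt⟩⟩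
  obtain ⟨hs, hs'⟩ := Finset.mem_filter.1 hs
  exact ⟨s, Finset.mem_range.1 hs, hs', fun u hu hu' =>
    hmin u (Finset.mem_filter.2 ⟨Finset.mem_range.2 hu, hu'⟩)⟩

theorem height_map_range {onLine : ℝ × ℝ → ℕ × ℤ → Prop} {m : ℕ} {g : ℕ → ℝ × ℝ} {x : ℕ × ℤ}
    {j : ℕ} (h : ∀ r < m, onLine (g r) x → r = j) :
    height onLine ((List.range m).map g) x =
      ind (j < m ∧ onLine (g j) x ∧ (g j).2 < (x.2 : ℝ)) := by
  rw [height, sum_map_eq_sum_range_pt, List.length_map, List.length_range]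
  have hpt (r) (hr : r ∈ Finset.range m) := pt_map_range g (Finset.mem_range.1 hr)
  have hoff (r) (hr : r ∈ Finset.range m) (hne : r ≠ j) :
      ind (onLine (pt ((List.range m).map g) r) x ∧ (pt ((List.range m).map g) r).2 < x.2) = 0 := by
    rw [hpt r hr]
    exact ind_false fun hline => hne (h r (Finset.mem_range.1 hr) hline.1)
  by_cases hj : j < m
  · rw [Finset.sum_eq_single_of_mem j (Finset.mem_range.2 hj) hoff, hpt j (Finset.mem_range.2 hj)]
    exact ind_congr (and_iff_right hj).symm
  · rw [ind_false fun hmem => hj hmem.1]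
    exact Finset.sum_eq_zero fun r hr => hoff r hr fun hrj => hj (hrj ▸ Finset.mem_range.1 hr)

namespace TypeA

variable {n i : ℕ} {k : ℤ} {y z : ℕ → ℤ}

/-- The path with second coordinates `y 0, …, y (n + 1)`. -/
noncomputable def path (n : ℕ) (y : ℕ → ℤ) : List (ℝ × ℝ) :=
  (List.range (n + 2)).map fun r : ℕ => ((r : ℝ), (y r : ℝ))

theorem pt_path (y : ℕ → ℤ) {r : ℕ} (hr : r < n + 2) : pt (path n y) r = ((r : ℝ), (y r : ℝ)) :=
  pt_map_range _ hr

theorem length_path (n : ℕ) (y : ℕ → ℤ) : (path n y).length = n + 2 := by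
  rw [path, List.length_map, List.length_range]

/-- The sequences of second coordinates of the paths of `𝒫_{i,k}`; they are integral, with junk
values beyond index `n + 1`. -/
structure IsProfile (n i : ℕ) (k : ℤ) (y : ℕ → ℤ) : Prop where
  left : y 0 = i + k
  right : y (n + 1) = n + 1 - i + k
  step : ∀ r ≤ n, y (r + 1) = y r + 1 ∨ y (r + 1) = y r - 1

theorem path_mem_pathsA (h : IsProfile n i k y) : path n y ∈ pathsA n i k := by
  refine ⟨length_path n y, fun r hr => by rw [pt_path y hr], ?_, ?_, fun r hr => ?_⟩
  · rw [pt_path y (by omega), h.left]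
    push_cast
    rfl
  · rw [pt_path y (by omega), h.right]
    push_cast
    rfl
  · rw [pt_path y (by omega), pt_path y (by omega)]
    refine (h.step r hr).imp (fun hup => ?_) fun hdown => ?_
    · dsimp only
      rw [hup]
      push_cast
      ring
    · dsimp only
      rw [hdown]
      push_cast
      ring

theorem exists_eq_path {p : List (ℝ × ℝ)} (h : p ∈ pathsA n i k) :
    ∃ y, IsProfile n i k y ∧ p = path n y := by
  obtain ⟨hlen, hfst, hleft, hright, hstep⟩ := h
  have hint (r) (hr : r < n + 2) : ∃ y : ℤ, (pt p r).2 = y := by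
    induction r with
    | zero => exact ⟨i + k, by rw [hleft]; push_cast; rfl⟩
    | succ r ih =>
      obtain ⟨y, hy⟩ := ih (by omega)
      rcases hstep r (by omega) with h | h
      · exact ⟨y + 1, by push_cast; linarith⟩
      · exact ⟨y - 1, by push_cast; linarith⟩
  choose! y hy using hint
  refine ⟨y, ⟨?_, ?_, fun r hr => ?_⟩, ext_pt (by rw [hlen, length_path]) fun r hr => ?_⟩
  · rw [hy 0 (by omega)] at hleft
    exact_mod_cast hleft
  · rw [hy (n + 1) (by omega)] at hright
    exact_mod_cast hright
  · have hstep := hstep r hr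
    rw [hy r (by omega), hy (r + 1) (by omega), sub_eq_iff_eq_add', sub_eq_iff_eq_add'] at hstep
    exact_mod_cast hstep
  · rw [hlen] at hr
    rw [pt_path y hr]
    exact Prod.ext (hfst r hr) (hy r hr)

theorem IsProfile.parity (h : IsProfile n i k y) (hx : (i, k) ∈ XA n) {r : ℕ} (hr : r ≤ n + 1) :
    ((r : ℤ) - y r) % 2 = 1 := by
  induction r with
  | zero =>
    have hik : ((i : ℤ) - k) % 2 = 1 := hx.2.2
    have hleft := h.left
    push_cast
    omega
  | succ r ih =>
    have hpar := ih (by omega)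
    have hstep := h.step r (by omega)
    push_cast
    omega

/-- The point `a` lies on the vertical line of the site `x`. Sites that do not have the parity of
`W` lie on no line. -/
def OnLine (a : ℝ × ℝ) (x : ℕ × ℤ) : Prop := ((x.1 : ℤ) - x.2) % 2 = 0 ∧ a.1 = (x.1 : ℝ)

theorem height_path (y : ℕ → ℤ) (j : ℕ) (l : ℤ) :
    height OnLine (path n y) (j, l) = ind (j ≤ n + 1 ∧ ((j : ℤ) - l) % 2 = 0 ∧ y j < l) := by
  rw [path, height_map_range (j := j) fun r _ hr => Nat.cast_injective hr.2]
  refine ind_congr ?_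
  rw [OnLine, Int.cast_lt, and_iff_left (rfl : (j : ℝ) = j)]
  exact and_congr_left' Order.lt_add_one_iff

theorem mem_Cp_path {j : ℕ} {l : ℤ} {up : Bool} : (j, l) ∈ Cp (.A n) (path n y) up ↔
    1 ≤ j ∧ j ≤ n ∧ y j = l ∧ y (j - 1) = l + (if up then 1 else -1) ∧
      y (j + 1) = l + (if up then 1 else -1) := by
  refine and_congr_right fun h1 => and_congr_right fun hn => ?_
  dsimp only
  rw [pt_path y (by omega), pt_path y (by omega), pt_path y (by omega), Prod.mk.injEq,
    and_iff_right rfl, Int.cast_inj]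
  have hcast : (if up then 1 else -1 : ℝ) = ((if up then 1 else -1 : ℤ) : ℝ) := by
    split_ifs <;> norm_num
  rw [hcast]
  dsimp only
  norm_cast

theorem mem_W_iff {j : ℕ} {l : ℤ} :
    (j, l) ∈ W (.A n) ↔ 1 ≤ j ∧ j ≤ n ∧ ((j : ℤ) - l) % 2 = 0 := by
  change (1 ≤ j ∧ j ≤ n ∧ ((j : ℤ) - (l - ((1 : ℕ) : ℤ))) % 2 = 1) ↔ _
  omega

/-- The additive map `Y_x ↦ A_x`, extended to functions of arbitrary support. -/
noncomputable def toA (n : ℕ) : ((ℕ × ℤ) → ℤ) →+ ((ℕ × ℤ) → ℤ) :=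
  AddMonoidHom.mk' (fun v => (XA n).indicator fun x =>
    v (x.1, x.2 - 1) + v (x.1, x.2 + 1) - v (x.1 - 1, x.2) - v (x.1 + 1, x.2)) fun v v' => by
      rw [← Set.indicator_add']
      congr 1
      funext x
      simp only [Pi.add_apply]
      ring

theorem toA_apply_of_mem {x : ℕ × ℤ} (hx : x ∈ XA n) (v : (ℕ × ℤ) → ℤ) : toA n v x =
    v (x.1, x.2 - 1) + v (x.1, x.2 + 1) - v (x.1 - 1, x.2) - v (x.1 + 1, x.2) := by
  rw [toA, AddMonoidHom.mk'_apply, Set.indicator_of_mem hx]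

theorem toA_apply_of_notMem {x : ℕ × ℤ} (hx : x ∉ XA n) (v : (ℕ × ℤ) → ℤ) : toA n v x = 0 := by
  rw [toA, AddMonoidHom.mk'_apply, Set.indicator_of_notMem hx]

theorem toA_Y {x : ℕ × ℤ} (hx : x ∈ W (.A n)) : toA n (Y x) = Amon (.A n) x.1 x.2 := by
  obtain ⟨j, l⟩ := x
  obtain ⟨h1, hn, hpar⟩ := mem_W_iff.1 hx
  funext ⟨a, b⟩
  have hAmon : Amon (.A n) j l (a, b) = Y (j, l + 1) (a, b) + Y (j, l - 1) (a, b)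
      - (if j = 1 then 0 else Y (j - 1, l) (a, b))
      - (if j = n then 0 else Y (j + 1, l) (a, b)) := by
    simp only [Amon, Pi.add_apply, Pi.sub_apply, apply_ite (fun v : ℕ × ℤ → ℤ => v (a, b)),
      Pi.zero_apply]
  rw [hAmon]
  by_cases hX : (a, b) ∈ XA n
  · rw [toA_apply_of_mem hX]
    obtain ⟨h1', hn', hpar'⟩ := hX
    simp only at h1' hn' hpar'
    simp only [Y, Prod.mk.injEq]
    rcases Nat.lt_trichotomy a j with h | h | h <;> grind
  · rw [toA_apply_of_notMem hX]
    have hX : ¬(1 ≤ a ∧ a ≤ n ∧ ((a : ℤ) - b) % 2 = 1) := hX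
    simp only [Y, Prod.mk.injEq]
    grind

theorem eq_zero_of_toA_eq_zero {v : (ℕ × ℤ) → ℤ} (hv : v ∈ lowBounded)
    (hsupp : ∀ x ∉ W (.A n), v x = 0) (h : toA n v = 0) : v = 0 := by
  obtain ⟨b, hb⟩ := hv
  refine eq_zero_of_rank Prod.snd hb fun ⟨j, l⟩ ih => ?_
  by_cases hW : (j, l) ∈ W (.A n)
  · obtain ⟨h1, hn, hpar⟩ := mem_W_iff.1 hW
    have hX : (j, l - 1) ∈ XA n := ⟨h1, hn, by dsimp only; omega⟩
    have hrec := congrFun h (j, l - 1)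
    rw [toA_apply_of_mem hX] at hrec
    simp only [sub_add_cancel, Pi.zero_apply] at hrec
    rwa [ih (j, l - 1 - 1) (by dsimp only; omega), ih (j - 1, l - 1) (by dsimp only; omega),
      ih (j + 1, l - 1) (by dsimp only; omega), zero_add, sub_zero, sub_zero] at hrec
  · exact hsupp _ hW

theorem mon_path (hx : (i, k) ∈ XA n) (h : IsProfile n i k y) :
    mon (.A n) (path n y) = toA n (height OnLine (path n y)) := by
  funext ⟨j, l⟩
  change ind ((j, l) ∈ _) - ind ((j, l) ∈ _) = _
  rw [ind_congr mem_Cp_path, ind_congr mem_Cp_path]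
  by_cases hX : (j, l) ∈ XA n
  · rw [toA_apply_of_mem hX]
    obtain ⟨h1, hn, hpar⟩ := hX
    dsimp only at h1 hn hpar
    have hpar' := h.parity hx (r := j) (by omega)
    have hright := h.step j hn
    have hleft := h.step (j - 1) (by omega)
    rw [Nat.sub_add_cancel h1] at hleft
    simp only [height_path, ind, if_true, Bool.false_eq_true, if_false, Nat.cast_sub h1,
      Nat.cast_add, Nat.cast_one]
    split_ifs <;> omega
  · have hno (up : Bool) : ¬(1 ≤ j ∧ j ≤ n ∧ y j = l ∧ y (j - 1) = l + (if up then 1 else -1) ∧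
        y (j + 1) = l + (if up then 1 else -1)) := by
      rintro ⟨h1, hn, rfl, -⟩
      exact hX ⟨h1, hn, h.parity hx (by omega)⟩
    rw [toA_apply_of_notMem hX, ind_false (hno true), ind_false (hno false), sub_self]

theorem height_of_loweredTo {x : ℕ × ℤ} (hx : x ∈ W (.A n)) {p q : List (ℝ × ℝ)}
    (h : LoweredTo (.A n) i k x.1 x.2 p q) : height OnLine q = height OnLine p - Y x := by
  obtain ⟨j, l⟩ := x
  have hpar := (mem_W_iff.1 hx).2.2
  obtain ⟨-, -, -, h : Replace1 p q ((j : ℝ), (l : ℝ) - 1) ((j : ℝ), (l : ℝ) + 1)⟩ := h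
  funext ⟨a, b⟩
  have hold : (l : ℝ) - 1 < b ↔ l - 1 < b := by exact_mod_cast Iff.rfl
  have hnew : (l : ℝ) + 1 < b ↔ l + 1 < b := by exact_mod_cast Iff.rfl
  have hdiff : height OnLine q (a, b) - height OnLine p (a, b) = -Y (j, l) (a, b) := by
    rw [height, height, h.sum_map]
    simp only [OnLine, hold, hnew, Nat.cast_inj, Y, Prod.mk.injEq, ind]
    split_ifs <;> omega
  rw [Pi.sub_apply]
  linarith

theorem weaklyAbove_path_iff :
    WeaklyAbove (path n y) (path n z) ↔ ∀ r < n + 2, y r ≤ z r := by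
  rw [WeaklyAbove, length_path, length_path, and_iff_right rfl]
  refine forall₂_congr fun r hr => ?_
  rw [pt_path y hr, pt_path z hr, Int.cast_le]

theorem weaklyAbove_of_height_le (hx : (i, k) ∈ XA n) (hz : IsProfile n i k z)
    (h : ∀ x, height OnLine (path n z) x ≤ height OnLine (path n y) x) :
    WeaklyAbove (path n y) (path n z) := by
  refine weaklyAbove_path_iff.2 fun r hr => ?_
  have hpar := hz.parity hx (r := r) (by omega)
  have hle := h (r, z r + 1)
  rw [height_path, height_path, ind_true (by omega)] at hle
  by_contra! hlt
  rw [ind_false (by omega)] at hle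
  omega

theorem IsProfile.exists_upper_corner (hx : (i, k) ∈ XA n) (hy : IsProfile n i k y)
    (hz : IsProfile n i k z) (hlt : ∃ r < n + 2, y r < z r) : ∃ r, 1 ≤ r ∧ r ≤ n ∧
      y (r - 1) = y r + 1 ∧ y (r + 1) = y r + 1 ∧ y r + 2 ≤ z r := by
  obtain ⟨r, hr, hrlt, hmin⟩ := exists_lowest_lt hlt
  have hleft : r ≠ 0 := by
    rintro rfl
    have := hy.left
    have := hz.left
    omega
  have hright : r ≠ n + 1 := by
    rintro rfl
    have := hy.right
    have := hz.right
    omega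
  have hpar_y := hy.parity hx (r := r) (by omega)
  have hpar_z := hz.parity hx (r := r) (by omega)
  have hy_next := hy.step r (by omega)
  have hz_next := hz.step r (by omega)
  have hy_prev := hy.step (r - 1) (by omega)
  have hz_prev := hz.step (r - 1) (by omega)
  have hmin_next := hmin (r + 1) (by omega)
  have hmin_prev := hmin (r - 1) (by omega)
  rw [Nat.sub_add_cancel (by omega)] at hy_prev hz_prev
  exact ⟨r, by omega, by omega, by omega, by omega, by omega⟩

theorem IsProfile.lower (h : IsProfile n i k y) {r : ℕ} (h1 : 1 ≤ r) (hn : r ≤ n)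
    (hprev : y (r - 1) = y r + 1) (hnext : y (r + 1) = y r + 1) :
    IsProfile n i k (Function.update y r (y r + 2)) := by
  refine ⟨?_, ?_, fun s hs => ?_⟩
  · rw [Function.update_of_ne (by omega), h.left]
  · rw [Function.update_of_ne (by omega), h.right]
  · obtain rfl | hsr := eq_or_ne s r
    · rw [Function.update_self, Function.update_of_ne (by omega)]
      omega
    obtain rfl | hsr' := eq_or_ne (s + 1) r
    · rw [Function.update_self, Function.update_of_ne hsr]
      rw [Nat.add_sub_cancel] at hprev
      omega
    · rw [Function.update_of_ne hsr, Function.update_of_ne hsr']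
      exact h.step s hs

theorem loweredTo_path (h : IsProfile n i k y) {r : ℕ} (h1 : 1 ≤ r) (hn : r ≤ n)
    (hprev : y (r - 1) = y r + 1) (hnext : y (r + 1) = y r + 1) :
    LoweredTo (.A n) i k r (y r + 1) (path n y) (path n (Function.update y r (y r + 2))) := by
  refine ⟨path_mem_pathsA h, path_mem_pathsA (h.lower h1 hn hprev hnext), ⟨?_, ?_⟩, r, ?_, ?_, ?_,
    ?_, fun s hs hsr => ?_⟩
  · simpa [mem_Cp_path, rr, h1, hn] using ⟨hprev, hnext⟩
  · rw [mem_Cp_path, rr]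
    omega
  · rw [length_path]
    omega
  · rw [pt_path y (by omega)]
    push_cast
    rw [add_sub_cancel_right]
  · rw [length_path, length_path]
  · rw [pt_path _ (by omega), Function.update_self]
    push_cast
    rw [add_assoc, one_add_one_eq_two]
  · rw [length_path] at hs
    rw [pt_path _ hs, pt_path _ hs, Function.update_of_ne hsr]

theorem exists_lower (hx : (i, k) ∈ XA n) (hy : IsProfile n i k y) (hz : IsProfile n i k z)
    (hle : WeaklyAbove (path n y) (path n z)) (hne : path n y ≠ path n z) :
    ∃ x ∈ W (.A n), ∃ p, LoweredTo (.A n) i k x.1 x.2 (path n y) p ∧ WeaklyAbove p (path n z) := by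
  rw [weaklyAbove_path_iff] at hle
  have hlt : ∃ r < n + 2, y r < z r := by
    by_contra! hge
    refine hne (ext_pt (by rw [length_path, length_path]) fun r hr => ?_)
    rw [length_path] at hr
    rw [pt_path y hr, pt_path z hr, (hle r hr).antisymm (hge r hr)]
  obtain ⟨r, h1, hn, hprev, hnext, hrz⟩ := hy.exists_upper_corner hx hz hlt
  have hpar := hy.parity hx (r := r) (by omega)
  refine ⟨(r, y r + 1), mem_W_iff.2 ⟨h1, hn, by omega⟩, _, loweredTo_path hy h1 hn hprev hnext,
    weaklyAbove_path_iff.2 fun s hs => ?_⟩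
  obtain rfl | hsr := eq_or_ne s r
  · rwa [Function.update_self]
  · rw [Function.update_of_ne hsr]
    exact hle s hs

theorem pt_eq_of_notMem_W {p q : List (ℝ × ℝ)} (hp : p ∈ pathsA n i k) (hq : q ∈ pathsA n i k)
    {r : ℕ} (hr : r < n + 2) {x : ℕ × ℤ} (hx : x ∉ W (.A n)) (h : OnLine (pt p r) x) :
    pt p r = pt q r := by
  obtain ⟨j, l⟩ := x
  obtain ⟨hpar, hfst⟩ := h
  obtain rfl : r = j := by
    rw [hp.2.1 r hr] at hfst
    exact_mod_cast hfst
  refine Prod.ext (by rw [hp.2.1 r hr, hq.2.1 r hr]) ?_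
  rw [mem_W_iff] at hx
  obtain rfl | rfl : r = 0 ∨ r = n + 1 := by omega
  · rw [hp.2.2.1, hq.2.2.1]
  · rw [hp.2.2.2.1, hq.2.2.2.1]

/-- The model of type `A_n`, whose lines are the columns of the plane. -/
noncomputable def model (n : ℕ) : PathModel (.A n) where
  onLine := OnLine
  toA := toA n
  fst_eq_of_onLine ha hb := ha.2.trans hb.2.symm
  toA_Y _ hx := toA_Y hx
  eq_zero_of_toA_eq_zero _ hv hsupp h := eq_zero_of_toA_eq_zero hv hsupp h
  mon_eq _ hx p hp := by
    obtain ⟨y, hy, rfl⟩ := exists_eq_path hp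
    exact mon_path hx hy
  height_lower _ _ _ hx _ _ h := height_of_loweredTo hx h
  length_eq _ _ p hp q hq := hp.1.trans hq.1.symm
  pt_fst_eq _ _ p hp q hq r hr := by
    rw [hp.1] at hr
    rw [hp.2.1 r hr, hq.2.1 r hr]
  onLine_pt _ _ p hp q hq r hr _ h := by
    rw [hp.1] at hr
    exact ⟨h.1, by rw [← h.2, hp.2.1 r hr, hq.2.1 r hr]⟩
  pt_eq_of_notMem_W _ _ p hp q hq r hr _ hz h := pt_eq_of_notMem_W hp hq (hp.1 ▸ hr) hz h
  weaklyAbove_of_height_le _ hx p hp q hq h := by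
    obtain ⟨y, -, rfl⟩ := exists_eq_path hp
    obtain ⟨z, hz, rfl⟩ := exists_eq_path hq
    exact weaklyAbove_of_height_le hx hz h
  exists_lower _ hx p hp q hq hle hne := by
    obtain ⟨y, hy, rfl⟩ := exists_eq_path hp
    obtain ⟨z, hz, rfl⟩ := exists_eq_path hq
    exact exists_lower hx hy hz hle hne

end TypeA

namespace TypeB

section SpinPath

theorem add_mul_lt_add_mul_iff {ε : ℝ} (h0 : 0 < ε) (h1 : ε < 1 / 2) {a s b t : ℤ} (hs : |s| ≤ 1)
    (ht : |t| ≤ 1) : (a : ℝ) + ε * s < b + ε * t ↔ 4 * a + s < 4 * b + t := by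
  rw [abs_le] at hs ht
  have hs₁ : (-1 : ℝ) ≤ s := by exact_mod_cast hs.1
  have hs₂ : (s : ℝ) ≤ 1 := by exact_mod_cast hs.2
  have ht₁ : (-1 : ℝ) ≤ t := by exact_mod_cast ht.1
  have ht₂ : (t : ℝ) ≤ 1 := by exact_mod_cast ht.2
  rcases lt_trichotomy a b with h | rfl | h
  · have hab : (a : ℝ) + 1 ≤ b := by exact_mod_cast h
    exact iff_of_true (by nlinarith) (by omega)
  · rw [add_lt_add_iff_left, add_lt_add_iff_left, mul_lt_mul_iff_right₀ h0, Int.cast_lt]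
  · have hab : (b : ℝ) + 1 ≤ a := by exact_mod_cast h
    exact iff_of_false (by nlinarith) (by omega)

/-- The column of the `r`-th point of a path of `𝒫_{N,ℓ}`. -/
def col (n : ℕ) (l : ℤ) (r : ℕ) : ℤ :=
  if r = n then 2 * n - 1 else if l % 4 = 3 then 2 * r else 4 * n - 2 - 2 * r

/-- The direction of the last step of a path of `𝒫_{N,ℓ}`, read at its last point, where it is the
coefficient of `ε`; zero at the other points. -/
def tilt (n : ℕ) (y : ℕ → ℤ) (r : ℕ) : ℤ := if r = n then y n - y (n - 1) else 0

/-- Four times the second coordinate of the `r`-th point of a path of `𝒫_{N,ℓ}`, with `ε` replaced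
by `1 / 4`, which does not affect comparisons. -/
def key (n : ℕ) (y : ℕ → ℤ) (r : ℕ) : ℤ := 4 * y r + tilt n y r

/-- The `r`-th point of the path of `𝒫_{N,ℓ}` with profile `y`. -/
noncomputable def spinPt (n : ℕ) (ε : ℝ) (l : ℤ) (y : ℕ → ℤ) (r : ℕ) : ℝ × ℝ :=
  ((col n l r : ℝ), (y r : ℝ) + ε * (tilt n y r : ℝ))

/-- The path of `𝒫_{N,ℓ}` with profile `y`. -/
noncomputable def spinPath (n : ℕ) (ε : ℝ) (l : ℤ) (y : ℕ → ℤ) : List (ℝ × ℝ) :=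
  (List.range (n + 1)).map (spinPt n ε l y)

/-- The profiles of the paths of `𝒫_{N,ℓ}`: their second coordinates with `ε` replaced by `0`, with
junk values beyond index `n`. -/
structure IsProfile (n : ℕ) (l : ℤ) (y : ℕ → ℤ) : Prop where
  zero : y 0 = l + 2 * n - 1
  step : ∀ r, r + 2 ≤ n → y (r + 1) = y r + 2 ∨ y (r + 1) = y r - 2
  last : y n = y (n - 1) + 1 ∨ y n = y (n - 1) - 1

variable {n : ℕ} {ε : ℝ} {l l' : ℤ} {y y' : ℕ → ℤ}

theorem col_of_ne {r : ℕ} (hr : r ≠ n) :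
    col n l r = if l % 4 = 3 then 2 * (r : ℤ) else 4 * n - 2 - 2 * r := if_neg hr

theorem col_self : col n l n = 2 * n - 1 := if_pos rfl

theorem tilt_of_ne {r : ℕ} (hr : r ≠ n) : tilt n y r = 0 := if_neg hr

theorem tilt_self : tilt n y n = y n - y (n - 1) := if_pos rfl

theorem key_of_ne {r : ℕ} (hr : r ≠ n) : key n y r = 4 * y r := by
  rw [key, tilt_of_ne hr, add_zero]

theorem key_self : key n y n = 4 * y n + (y n - y (n - 1)) := by
  rw [key, tilt_self]

theorem spinPt_of_ne {r : ℕ} (hr : r ≠ n) : spinPt n ε l y r = ((col n l r : ℝ), (y r : ℝ)) := by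
  rw [spinPt, tilt_of_ne hr, Int.cast_zero, mul_zero, add_zero]

theorem length_spinPath (n : ℕ) (ε : ℝ) (l : ℤ) (y : ℕ → ℤ) :
    (spinPath n ε l y).length = n + 1 := by
  rw [spinPath, List.length_map, List.length_range]

theorem pt_spinPath {r : ℕ} (hr : r ≤ n) : pt (spinPath n ε l y) r = spinPt n ε l y r :=
  pt_map_range _ (Nat.lt_succ_of_le hr)

theorem IsProfile.abs_tilt_le (h : IsProfile n l y) (r : ℕ) : |tilt n y r| ≤ 1 := by
  have hlast := h.last
  rw [tilt, abs_le]
  split_ifs <;> omega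

theorem IsProfile.parity (h : IsProfile n l y) {r : ℕ} (hr : r < n) :
    (y r - (l + 2 * n - 1 + 2 * r)) % 4 = 0 := by
  induction r with
  | zero =>
    have hzero := h.zero
    push_cast
    omega
  | succ r ih =>
    have hpar := ih (by omega)
    have hstep := h.step r (by omega)
    push_cast
    omega

theorem IsProfile.parity_pred (h : IsProfile n l y) (hn : 1 ≤ n) :
    (y (n - 1) - (l + 1)) % 4 = 0 := by
  have hpar := h.parity (r := n - 1) (by omega)
  push_cast [Nat.cast_sub hn] at hpar
  omega

theorem IsProfile.spinPt_lt_iff (h0 : 0 < ε) (h1 : ε < 1 / 2) (hy : IsProfile n l y)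
    (hy' : IsProfile n l' y') {r s : ℕ} :
    (spinPt n ε l y r).2 < (spinPt n ε l' y' s).2 ↔ key n y r < key n y' s :=
  add_mul_lt_add_mul_iff h0 h1 (hy.abs_tilt_le r) (hy'.abs_tilt_le s)

theorem IsProfile.spinPt_lt_intCast_iff (h0 : 0 < ε) (h1 : ε < 1 / 2) (hy : IsProfile n l y)
    {r : ℕ} {m : ℤ} : (spinPt n ε l y r).2 < (m : ℝ) ↔ key n y r < 4 * m := by
  simpa using! add_mul_lt_add_mul_iff h0 h1 (a := y r) (b := m) (hy.abs_tilt_le r) (t := 0)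

theorem spinPath_mem_pathsBspin (hn : 1 ≤ n) (h : IsProfile n l y) :
    spinPath n ε l y ∈ pathsBspin n ε l := by
  have hpt {r : ℕ} (hr : r < n) : pt (spinPath n ε l y) r = ((col n l r : ℝ), (y r : ℝ)) := by
    rw [pt_spinPath hr.le, spinPt_of_ne hr.ne]
  refine ⟨length_spinPath n ε l y, ?_, ?_, ?_, fun r hr => ?_, ?_⟩
  · split_ifs with hl <;> intro r hr <;> rw [hpt hr, col_of_ne hr.ne] <;> simp [hl]
  · rw [pt_spinPath le_rfl, spinPt, col_self]
    push_cast
    rfl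
  · rw [hpt hn, h.zero]
    push_cast
    rfl
  · rw [hpt (by omega), hpt (by omega)]
    refine (h.step r hr).imp (fun hup => ?_) fun hdown => ?_
    · dsimp only
      rw [hup]
      push_cast
      ring
    · dsimp only
      rw [hdown]
      push_cast
      ring
  · rw [pt_spinPath le_rfl, hpt (Nat.sub_one_lt_of_lt hn), spinPt, tilt_self]
    refine h.last.imp (fun hup => ?_) fun hdown => ?_
    · dsimp only
      rw [hup]
      push_cast
      ring
    · dsimp only
      rw [hdown]
      push_cast
      ring

theorem exists_snd_pt_eq_intCast {p : List (ℝ × ℝ)} (h : p ∈ pathsBspin n ε l) {r : ℕ}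
    (hr : r < n) : ∃ y : ℤ, (pt p r).2 = y := by
  obtain ⟨-, -, -, hzero, hstep, -⟩ := h
  induction r with
  | zero => exact ⟨l + 2 * n - 1, by rw [hzero]; push_cast; rfl⟩
  | succ r ih =>
    obtain ⟨y, hy⟩ := ih (by omega)
    rcases hstep r (by omega) with h | h
    · exact ⟨y + 2, by push_cast; linarith⟩
    · exact ⟨y - 2, by push_cast; linarith⟩

theorem exists_eq_spinPath (hn : 2 ≤ n) {p : List (ℝ × ℝ)} (h : p ∈ pathsBspin n ε l) :
    ∃ y, IsProfile n l y ∧ p = spinPath n ε l y := by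
  have hint (r) (hr : r < n) := exists_snd_pt_eq_intCast h hr
  obtain ⟨hlen, hfst, hfst_last, hzero, hstep, hlast⟩ := h
  obtain ⟨s, hs, hsnd_last⟩ : ∃ s : ℤ, (s = 1 ∨ s = -1) ∧
      (pt p n).2 = (pt p (n - 1)).2 + s + ε * s := by
    rcases hlast with h | h
    · exact ⟨1, Or.inl rfl, by push_cast; linarith⟩
    · exact ⟨-1, Or.inr rfl, by push_cast; linarith⟩
  choose! y hy using hint
  have hself : Function.update y n (y (n - 1) + s) n = y (n - 1) + s := Function.update_self ..
  have hne {r : ℕ} (hr : r < n) : Function.update y n (y (n - 1) + s) r = y r :=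
    Function.update_of_ne hr.ne ..
  refine ⟨Function.update y n (y (n - 1) + s), ⟨?_, fun r hr => ?_, ?_⟩,
    ext_pt (by rw [hlen, length_spinPath]) fun r hr => ?_⟩
  · rw [hy 0 (by omega)] at hzero
    rw [hne (by omega)]
    exact_mod_cast hzero
  · have hstep := hstep r hr
    rw [hy r (by omega), hy (r + 1) (by omega), sub_eq_iff_eq_add', sub_eq_iff_eq_add'] at hstep
    rw [hne (by omega), hne (by omega)]
    exact_mod_cast hstep
  · rw [hself, hne (by omega)]
    omega
  · rw [pt_spinPath (by omega)]
    obtain rfl | hrn := eq_or_ne r n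
    · rw [spinPt, col_self, tilt_self, hself, hne (by omega), add_sub_cancel_left]
      refine Prod.ext (by rw [hfst_last]; push_cast; rfl) ?_
      rw [hsnd_last, hy (r - 1) (by omega)]
      push_cast
      rfl
    · have hr : r < n := by omega
      rw [spinPt_of_ne hrn, hne hr, col_of_ne hrn]
      refine Prod.ext ?_ (hy r hr)
      split_ifs at hfst ⊢ <;> rw [hfst r hr] <;> push_cast <;> rfl

/-- The point `a` lies on the line of the site `x` if it is the point with index `x.1` of a path of
some `𝒫_{N,ℓ}` for which `x` has the parity of a site at which such a path can be moved. For
`x.1 < N` this is the column of `ι x`. On the middle column, the condition on parity separates the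
last points of paths with `ℓ ≡ 1` and `ℓ ≡ 3` modulo `4`, which move at different sites. -/
def OnLine (n : ℕ) (ε : ℝ) (a : ℝ × ℝ) (x : ℕ × ℤ) : Prop :=
  ∃ l y, l % 2 = 1 ∧ IsProfile n l y ∧ x.1 ≤ n ∧ (x.2 - (l + 1 + 2 * (n + x.1))) % 4 = 0 ∧
    a = spinPt n ε l y x.1

theorem OnLine.fst_eq {a b : ℝ × ℝ} {x : ℕ × ℤ} (ha : OnLine n ε a x) (hb : OnLine n ε b x) :
    a.1 = b.1 := by
  obtain ⟨l, y, hl, -, -, hx, rfl⟩ := ha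
  obtain ⟨l', y', hl', -, -, hx', rfl⟩ := hb
  have hll : l % 4 = l' % 4 := by omega
  rw [spinPt, spinPt, col, col, hll]

theorem IsProfile.eq_of_spinPt_eq (hn : 1 ≤ n) (h0 : 0 < ε) (h1 : ε < 1 / 2) (hl : l % 2 = 1)
    (hl' : l' % 2 = 1) (hy : IsProfile n l y) (hy' : IsProfile n l' y') {r s : ℕ} (hr : r ≤ n)
    (hs : s ≤ n) (h : spinPt n ε l y r = spinPt n ε l' y' s) : r = s ∧ l % 4 = l' % 4 := by
  have hcol : col n l r = col n l' s := Int.cast_injective (congrArg Prod.fst h)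
  have hkey : key n y r = key n y' s :=
    (not_lt.1 ((hy'.spinPt_lt_iff h0 h1 hy).not.1 (congrArg Prod.snd h).not_gt)).antisymm
      (not_lt.1 ((hy.spinPt_lt_iff h0 h1 hy').not.1 (congrArg Prod.snd h).not_lt))
  obtain rfl | hrn := eq_or_ne r n
  · obtain rfl | hsn := eq_or_ne s r
    · have hlast := hy.last
      have hlast' := hy'.last
      have hpar := hy.parity_pred hn
      have hpar' := hy'.parity_pred hn
      rw [key_self, key_self] at hkey
      omega
    · rw [col_self, col_of_ne hsn] at hcol
      split_ifs at hcol <;> omega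
  · rw [col_of_ne hrn, col] at hcol
    split_ifs at hcol <;> omega

theorem onLine_spinPt_iff (hn : 1 ≤ n) (h0 : 0 < ε) (h1 : ε < 1 / 2) (hl : l % 2 = 1)
    (hy : IsProfile n l y) {r : ℕ} (hr : r ≤ n) {x : ℕ × ℤ} :
    OnLine n ε (spinPt n ε l y r) x ↔ r = x.1 ∧ (x.2 - (l + 1 + 2 * (n + x.1))) % 4 = 0 := by
  refine ⟨fun ⟨l', y', hl', hy', hx, hpar, h⟩ => ?_, ?_⟩
  · obtain ⟨hrx, hll⟩ := hy.eq_of_spinPt_eq hn h0 h1 hl hl' hy' hr hx h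
    exact ⟨hrx, by omega⟩
  · rintro ⟨rfl, hpar⟩
    exact ⟨l, y, hl, hy, hr, hpar, rfl⟩

theorem onLine_spinPt_and_lt_iff (hn : 1 ≤ n) (h0 : 0 < ε) (h1 : ε < 1 / 2) (hl : l % 2 = 1)
    (hy : IsProfile n l y) {r : ℕ} (hr : r ≤ n) {x : ℕ × ℤ} :
    OnLine n ε (spinPt n ε l y r) x ∧ (spinPt n ε l y r).2 < x.2 ↔
      r = x.1 ∧ (x.2 - (l + 1 + 2 * (n + x.1))) % 4 = 0 ∧ y r < x.2 := by
  rw [onLine_spinPt_iff hn h0 h1 hl hy hr, hy.spinPt_lt_intCast_iff h0 h1, and_assoc]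
  refine and_congr_right fun hrx => and_congr_right fun hpar => ?_
  have hlast := hy.last
  have hpar_pred := hy.parity_pred hn
  obtain rfl | hrn := eq_or_ne r n
  · rw [key_self]
    omega
  · rw [key_of_ne hrn]
    omega

theorem height_spinPath (hn : 1 ≤ n) (h0 : 0 < ε) (h1 : ε < 1 / 2) (hl : l % 2 = 1)
    (hy : IsProfile n l y) (j : ℕ) (m : ℤ) : height (OnLine n ε) (spinPath n ε l y) (j, m) =
      ind (j ≤ n ∧ (m - (l + 1 + 2 * (n + j))) % 4 = 0 ∧ y j < m) := by
  rw [spinPath, height_map_range (j := j) fun r hr h =>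
    ((onLine_spinPt_iff hn h0 h1 hl hy (Nat.le_of_lt_succ hr)).1 h).1]
  refine ind_congr (Iff.trans (and_congr_left' Order.lt_add_one_iff)
    (and_congr_right fun hj => ?_))
  rw [onLine_spinPt_and_lt_iff hn h0 h1 hl hy hj, and_iff_right rfl]

end SpinPath

section Height

variable {n : ℕ} {ε : ℝ} {l : ℤ} {y : ℕ → ℤ}

theorem mem_W_iff (hn : 2 ≤ n) {j : ℕ} {m : ℤ} :
    (j, m) ∈ W (.B n ε) ↔ 1 ≤ j ∧ j ≤ n ∧ m % 2 = 0 := by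
  change (j = n ∧ (m - ((if j = n then 1 else 2 : ℕ) : ℤ)) % 2 = 1) ∨
    (1 ≤ j ∧ j < n ∧ (m - ((if j = n then 1 else 2 : ℕ) : ℤ)) % 2 = 0) ↔ _
  split_ifs <;> push_cast <;> omega

/-- The additive map `Y_x ↦ A_x`, extended to functions of arbitrary support. -/
noncomputable def toA (n : ℕ) : ((ℕ × ℤ) → ℤ) →+ ((ℕ × ℤ) → ℤ) :=
  AddMonoidHom.mk' (fun v => (XB n).indicator fun x =>
    if x.1 = n then
      v (n, x.2 - 1) + v (n, x.2 + 1) - v (n - 1, x.2 + 1) - v (n - 1, x.2 - 1)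
    else v (x.1, x.2 - 2) + v (x.1, x.2 + 2) - v (x.1 - 1, x.2) - v (x.1 + 1, x.2))
    fun v v' => by
      rw [← Set.indicator_add']
      congr 1
      funext x
      simp only [Pi.add_apply]
      split_ifs <;> ring

theorem toA_apply_last {m : ℤ} (hm : m % 2 = 1) (v : (ℕ × ℤ) → ℤ) : toA n v (n, m) =
    v (n, m - 1) + v (n, m + 1) - v (n - 1, m + 1) - v (n - 1, m - 1) := by
  rw [toA, AddMonoidHom.mk'_apply, Set.indicator_of_mem, if_pos rfl]
  exact Or.inl ⟨rfl, hm⟩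

theorem toA_apply_of_lt {j : ℕ} {m : ℤ} (hj : 1 ≤ j) (hjn : j < n) (hm : m % 2 = 0)
    (v : (ℕ × ℤ) → ℤ) : toA n v (j, m) =
      v (j, m - 2) + v (j, m + 2) - v (j - 1, m) - v (j + 1, m) := by
  rw [toA, AddMonoidHom.mk'_apply, Set.indicator_of_mem, if_neg hjn.ne]
  exact Or.inr ⟨hj, hjn, hm⟩

theorem toA_apply_of_notMem {x : ℕ × ℤ} (hx : x ∉ XB n) (v : (ℕ × ℤ) → ℤ) : toA n v x = 0 := by
  rw [toA, AddMonoidHom.mk'_apply, Set.indicator_of_notMem hx]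

theorem toA_Y (hn : 2 ≤ n) {x : ℕ × ℤ} (hx : x ∈ W (.B n ε)) :
    toA n (Y x) = Amon (.B n ε) x.1 x.2 := by
  obtain ⟨j, m⟩ := x
  obtain ⟨h1, hjn, hpar⟩ := (mem_W_iff hn).1 hx
  funext ⟨a, b⟩
  simp only [Amon, apply_ite (fun v : ℕ × ℤ → ℤ => v (a, b)), Pi.add_apply, Pi.sub_apply,
    Pi.zero_apply]
  by_cases hX : (a, b) ∈ XB n
  · obtain ⟨rfl, hb⟩ | ⟨ha, han, hb⟩ := hX
    · rw [toA_apply_last hb]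
      simp only [Y, Prod.mk.injEq]
      grind (splits := 25)
    · dsimp only at ha han hb
      rw [toA_apply_of_lt ha han hb]
      simp only [Y, Prod.mk.injEq]
      grind (splits := 25)
  · rw [toA_apply_of_notMem hX]
    have hX : ¬((a = n ∧ b % 2 = 1) ∨ (1 ≤ a ∧ a < n ∧ b % 2 = 0)) := hX
    simp only [Y, Prod.mk.injEq]
    grind

theorem eq_zero_of_toA_eq_zero (hn : 2 ≤ n) {v : (ℕ × ℤ) → ℤ} (hv : v ∈ lowBounded)
    (hsupp : ∀ x ∉ W (.B n ε), v x = 0) (h : toA n v = 0) : v = 0 := by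
  obtain ⟨b, hb⟩ := hv
  refine eq_zero_of_rank (fun x => 2 * x.2 + if x.1 = n then 1 else 0) (b := 2 * b)
    (fun x hx => hb x (by split_ifs at hx <;> omega)) fun ⟨j, m⟩ ih => ?_
  dsimp only at ih
  by_cases hW : (j, m) ∈ W (.B n ε)
  · obtain ⟨h1, hjn, hpar⟩ := (mem_W_iff hn).1 hW
    obtain rfl | hjn := hjn.eq_or_lt
    · have hrec := congrFun h (j, m - 1)
      rw [toA_apply_last (by omega)] at hrec
      simp only [sub_add_cancel, Pi.zero_apply] at hrec
      rwa [ih (j, m - 1 - 1) (by dsimp only; omega),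
        ih (j - 1, m) (by dsimp only; split_ifs <;> omega),
        ih (j - 1, m - 1 - 1) (by dsimp only; split_ifs <;> omega), zero_add, sub_zero,
        sub_zero] at hrec
    · have hrec := congrFun h (j, m - 2)
      rw [toA_apply_of_lt h1 hjn (by omega)] at hrec
      simp only [sub_add_cancel, Pi.zero_apply] at hrec
      rwa [ih (j, m - 2 - 2) (by dsimp only; split_ifs <;> omega),
        ih (j - 1, m - 2) (by dsimp only; split_ifs <;> omega),
        ih (j + 1, m - 2) (by dsimp only; split_ifs <;> omega), zero_add, sub_zero,
        sub_zero] at hrec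
  · exact hsupp _ hW

/-- The corners of a profile: `IsCorner n y true j m` means that the path of `𝒫_{N,ℓ}` with profile
`y` has an upper corner at `(j, m)`, and `IsCorner n y false j m` that it has a lower corner. -/
def IsCorner (n : ℕ) (y : ℕ → ℤ) (up : Bool) (j : ℕ) (m : ℤ) : Prop :=
  1 ≤ j ∧ j ≤ n ∧ y j = m ∧
    if up then y j < y (j - 1) ∧ (j < n → y j < y (j + 1))
    else y (j - 1) < y j ∧ (j < n → y (j + 1) < y j)

theorem IsProfile.mem_XB_of_isCorner (hl : l % 2 = 1) (h : IsProfile n l y) {up : Bool} {j : ℕ}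
    {m : ℤ} (hc : IsCorner n y up j m) : (j, m) ∈ XB n := by
  obtain ⟨h1, hjn, rfl, -⟩ := hc
  obtain rfl | hjn := hjn.eq_or_lt
  · have hpar := h.parity_pred h1
    have hlast := h.last
    exact Or.inl ⟨rfl, by dsimp only; omega⟩
  · have hpar := h.parity hjn
    exact Or.inr ⟨h1, hjn, by dsimp only; omega⟩

theorem IsProfile.toA_height_last (hn : 1 ≤ n) (h0 : 0 < ε) (h1 : ε < 1 / 2) (hl : l % 2 = 1)
    (h : IsProfile n l y) {m : ℤ} (hm : m % 2 = 1) :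
    toA n (height (OnLine n ε) (spinPath n ε l y)) (n, m) =
      ind (IsCorner n y true n m) - ind (IsCorner n y false n m) := by
  have hpar := h.parity_pred hn
  have hlast := h.last
  rw [toA_apply_last hm]
  simp only [height_spinPath hn h0 h1 hl h, IsCorner, ind, if_true, Bool.false_eq_true, if_false,
    Nat.cast_sub hn]
  split_ifs <;> omega

theorem ind_lt_eq_ind_corner {a b c m : ℤ} (hm : (m - c) % 4 = 0) (ha : a = c + 2 ∨ a = c - 2)
    (hb : b = c + 2 ∨ b = c - 2 ∨ b = c + 1 ∨ b = c - 1) :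
    ind (c < m - 2) + ind (c < m + 2) - ind (a < m) - ind (b < m) =
      ind (c = m ∧ c < a ∧ c < b) - ind (c = m ∧ a < c ∧ b < c) := by
  obtain hmc | hmc | hmc : m + 4 ≤ c ∨ c = m ∨ c + 4 ≤ m := by omega
  · rw [ind_false (by omega), ind_false (by omega), ind_false (by omega), ind_false (by omega),
      ind_false (by omega), ind_false (by omega), sub_self]
    rfl
  · simp only [ind]
    split_ifs <;> omega
  · rw [ind_true (by omega), ind_true (by omega), ind_true (by omega), ind_true (by omega),
      ind_false (by omega), ind_false (by omega)]
    rfl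

theorem IsProfile.toA_height_of_lt (hn : 1 ≤ n) (h0 : 0 < ε) (h1 : ε < 1 / 2) (hl : l % 2 = 1)
    (h : IsProfile n l y) {j : ℕ} {m : ℤ} (hj : 1 ≤ j) (hjn : j < n) (hm : m % 2 = 0) :
    toA n (height (OnLine n ε) (spinPath n ε l y)) (j, m) =
      ind (IsCorner n y true j m) - ind (IsCorner n y false j m) := by
  have hpar := h.parity hjn
  have hprev := h.step (j - 1) (by omega)
  rw [Nat.sub_add_cancel hj] at hprev
  have hnext : y (j + 1) = y j + 2 ∨ y (j + 1) = y j - 2 ∨ y (j + 1) = y j + 1 ∨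
      y (j + 1) = y j - 1 := by
    obtain rfl | hjn := Nat.succ_le_iff.2 hjn |>.eq_or_lt
    · exact Or.inr (Or.inr h.last)
    · have := h.step j hjn
      omega
  have hcorner_up : IsCorner n y true j m ↔ y j = m ∧ y j < y (j - 1) ∧ y j < y (j + 1) := by
    simp only [IsCorner, if_true]
    omega
  have hcorner_down : IsCorner n y false j m ↔ y j = m ∧ y (j - 1) < y j ∧ y (j + 1) < y j := by
    simp only [IsCorner, Bool.false_eq_true, if_false]
    omega
  rw [toA_apply_of_lt hj hjn hm, height_spinPath hn h0 h1 hl h, height_spinPath hn h0 h1 hl h,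
    height_spinPath hn h0 h1 hl h, height_spinPath hn h0 h1 hl h, ind_congr hcorner_up,
    ind_congr hcorner_down, Nat.cast_sub hj, Nat.cast_add, Nat.cast_one]
  by_cases hmy : (m - y j) % 4 = 0
  · rw [← ind_lt_eq_ind_corner hmy (by omega) hnext]
    refine congr_arg₂ _ (congr_arg₂ _ (congr_arg₂ _ ?_ ?_) ?_) ?_
    all_goals exact ind_congr (by omega)
  · rw [ind_false (by omega), ind_false (by omega), ind_false (by omega), ind_false (by omega),
      ind_false (by omega), ind_false (by omega)]
    rfl

theorem IsProfile.toA_height (hn : 1 ≤ n) (h0 : 0 < ε) (h1 : ε < 1 / 2) (hl : l % 2 = 1)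
    (h : IsProfile n l y) (j : ℕ) (m : ℤ) :
    toA n (height (OnLine n ε) (spinPath n ε l y)) (j, m) =
      ind (IsCorner n y true j m) - ind (IsCorner n y false j m) := by
  by_cases hX : (j, m) ∈ XB n
  · obtain ⟨rfl, hm⟩ | ⟨hj, hjn, hm⟩ := hX
    · exact h.toA_height_last hn h0 h1 hl hm
    · exact h.toA_height_of_lt hn h0 h1 hl hj hjn hm
  · rw [toA_apply_of_notMem hX, ind_false (hX ∘ h.mem_XB_of_isCorner hl),
      ind_false (hX ∘ h.mem_XB_of_isCorner hl), sub_self]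

end Height

section SpinPoint

variable {n : ℕ} {ε : ℝ} {l : ℤ} {y y' z : ℕ → ℤ}

theorem IsProfile.spinPt_eq_iotaB_iff (hl : l % 2 = 1) (h : IsProfile n l y) {r j : ℕ} {m : ℤ}
    (hr : r ≤ n) (hjn : j < n) :
    spinPt n ε l y r = (((iotaB n (j, m)).1 : ℝ), (m : ℝ)) ↔ r = j ∧ y j = m := by
  have hpar := h.parity hjn
  have hiota : (iotaB n (j, m)).1 =
      if (2 * (n : ℤ) + m - 2 * j) % 4 = 2 then 2 * (j : ℤ) else 4 * n - 2 - 2 * j := by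
    rw [iotaB, if_neg hjn.ne, apply_ite Prod.fst]
  obtain rfl | hrn := eq_or_ne r n
  · refine iff_of_false (fun heq => ?_) fun hrj => hjn.ne' hrj.1
    have hcol : col r l r = (iotaB r (j, m)).1 := Int.cast_injective (congrArg Prod.fst heq)
    rw [col_self, hiota] at hcol
    split_ifs at hcol <;> omega
  · rw [spinPt_of_ne hrn, Prod.mk.injEq, Int.cast_inj, Int.cast_inj, col_of_ne hrn, hiota]
    constructor
    · rintro ⟨hcol, rfl⟩
      obtain rfl : r = j := by split_ifs at hcol <;> omega
      exact ⟨rfl, rfl⟩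
    · rintro ⟨rfl, rfl⟩
      refine ⟨?_, rfl⟩
      split_ifs <;> omega

theorem IsProfile.spinPt_eq_last_iff (h0 : 0 < ε) (h1 : ε < 1 / 2) (h : IsProfile n l y) {r : ℕ}
    {m s : ℤ} (hs : |s| ≤ 1) (hr : r ≤ n) :
    spinPt n ε l y r = (2 * (n : ℝ) - 1, (m : ℝ) + ε * s) ↔
      r = n ∧ y n = m ∧ y n - y (n - 1) = s := by
  have hcast : 2 * (n : ℝ) - 1 = ((2 * n - 1 : ℤ) : ℝ) := by push_cast; rfl
  rw [hcast, spinPt, Prod.mk.injEq, Int.cast_inj]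
  obtain rfl | hrn := eq_or_ne r n
  · rw [col_self, and_iff_right rfl, and_iff_right rfl, ← tilt_self]
    refine ⟨fun heq => ?_, fun ⟨hy, ht⟩ => by rw [hy, ht]⟩
    have hle := (add_mul_lt_add_mul_iff h0 h1 (h.abs_tilt_le r) hs).not.1 heq.not_lt
    have hge := (add_mul_lt_add_mul_iff h0 h1 hs (h.abs_tilt_le r)).not.1 heq.not_gt
    have ht := h.abs_tilt_le r
    rw [abs_le] at hs ht
    omega
  · refine iff_of_false (fun ⟨hcol, _⟩ => ?_) fun hrn' => hrn hrn'.1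
    rw [col_of_ne hrn] at hcol
    split_ifs at hcol <;> omega

theorem mem_spinPath_iff_isCorner (hn : 1 ≤ n) (h0 : 0 < ε) (h1 : ε < 1 / 2) (h : IsProfile n l y)
    {up : Bool} {m : ℤ} :
    (2 * (n : ℝ) - 1, (m : ℝ) + ε * ((if up then -1 else 1 : ℤ) : ℝ)) ∈ spinPath n ε l y ↔
      IsCorner n y up n m := by
  have hs : |(if up then -1 else 1 : ℤ)| ≤ 1 := by split_ifs <;> simp
  have hlast := h.last
  rw [spinPath, List.mem_map]
  trans y n = m ∧ y n - y (n - 1) = if up then -1 else 1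
  · constructor
    · rintro ⟨r, hr, heq⟩
      exact ((h.spinPt_eq_last_iff h0 h1 hs (Nat.le_of_lt_succ (List.mem_range.1 hr))).1 heq).2
    · exact fun hm => ⟨n, List.mem_range.2 n.lt_succ_self,
        (h.spinPt_eq_last_iff h0 h1 hs le_rfl).2 ⟨rfl, hm⟩⟩
  · rw [IsCorner, and_iff_right hn, and_iff_right le_rfl]
    cases up <;> simp only [if_true, Bool.false_eq_true, if_false] <;> omega

theorem IsProfile.key_lt_key_succ_iff (h : IsProfile n l y) {r : ℕ} (hr : r < n) :
    (key n y r < key n y (r + 1) ↔ y r < y (r + 1)) ∧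
      (key n y (r + 1) < key n y r ↔ y (r + 1) < y r) := by
  have hlast := h.last
  rw [key_of_ne hr.ne]
  obtain rfl | hrn := eq_or_ne (r + 1) n
  · rw [key_self]
    rw [Nat.add_sub_cancel] at hlast ⊢
    omega
  · rw [key_of_ne hrn]
    omega

theorem IsProfile.mod_eq_of_isCorner {l' : ℤ} (h : IsProfile n l y) (h' : IsProfile n l' y')
    {up : Bool} {j : ℕ} {m : ℤ} (hc : IsCorner n y up j m) (hc' : IsCorner n y' up j m) :
    (l - l') % 4 = 0 := by
  obtain ⟨h1, hjn, hm, hc⟩ := hc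
  obtain ⟨-, -, hm', hc'⟩ := hc'
  obtain rfl | hjn := hjn.eq_or_lt
  · have hpar := h.parity_pred h1
    have hpar' := h'.parity_pred h1
    have hlast := h.last
    have hlast' := h'.last
    split_ifs at hc hc' <;> omega
  · have hpar := h.parity hjn
    have hpar' := h'.parity hjn
    omega

theorem IsProfile.key_le_key_iff (hn : 1 ≤ n) (hy : IsProfile n l y) (hz : IsProfile n l z)
    {r : ℕ} : key n y r ≤ key n z r ↔ y r ≤ z r := by
  obtain rfl | hrn := eq_or_ne r n
  · have hpar_y := hy.parity_pred hn
    have hpar_z := hz.parity_pred hn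
    have hlast_y := hy.last
    have hlast_z := hz.last
    rw [key_self, key_self]
    omega
  · rw [key_of_ne hrn, key_of_ne hrn]
    omega

theorem IsProfile.le_of_forall_lt (hn : 1 ≤ n) (hy : IsProfile n l y) (hz : IsProfile n l z)
    (h : ∀ j ≤ n, ∀ m : ℤ, (m - (l + 1 + 2 * (n + j))) % 4 = 0 → z j < m → y j < m) {r : ℕ}
    (hr : r ≤ n) : y r ≤ z r := by
  have hlt {s : ℕ} (hs : s < n) : y s ≤ z s := by
    have hpar_y := hy.parity hs
    have hpar_z := hz.parity hs
    have := h s hs.le (z s + 2) (by omega) (by omega)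
    omega
  obtain rfl | hr := hr.eq_or_lt
  · have hpar_y := hy.parity_pred hn
    have hpar_z := hz.parity_pred hn
    have hlast_y := hy.last
    have hlast_z := hz.last
    have hpred := hlt (Nat.sub_one_lt_of_lt hn)
    have := h r le_rfl (z (r - 1)) (by omega)
    omega
  · exact hlt hr

/-- The profile of the path obtained by lowering the path of `𝒫_{N,ℓ}` with profile `y` at its
upper corner with index `j`. -/
def lower (n : ℕ) (y : ℕ → ℤ) (j r : ℕ) : ℤ :=
  if r = j then y j + (if j = n then 2 else 4)
  else if j + 1 = n ∧ r = n then y n + 2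
  else y r

theorem lower_apply_self {j : ℕ} : lower n y j j = y j + if j = n then 2 else 4 := if_pos rfl

theorem lower_apply_last {j : ℕ} (hj : j + 1 = n) : lower n y j n = y n + 2 := by
  rw [lower, if_neg (by omega), if_pos ⟨hj, rfl⟩]

theorem lower_apply_of_ne {j r : ℕ} (hrj : r ≠ j) (h : j + 1 = n → r ≠ n) :
    lower n y j r = y r := by
  rw [lower, if_neg hrj, if_neg (not_and.2 h)]

theorem le_lower (n : ℕ) (y : ℕ → ℤ) (j r : ℕ) : y r ≤ lower n y j r := by
  grind [lower]

theorem IsCorner.isProfile_lower {j : ℕ} {m : ℤ} (hc : IsCorner n y true j m)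
    (h : IsProfile n l y) : IsProfile n l (lower n y j) := by
  obtain ⟨h1, hjn, -, hprev, hnext⟩ := hc
  have hlast := h.last
  refine ⟨?_, fun r hr => ?_, ?_⟩
  · rw [lower_apply_of_ne (by omega) (by omega), h.zero]
  · have hstep := h.step r hr
    grind [lower]
  · grind [lower]

theorem IsProfile.exists_upper_corner (hy : IsProfile n l y) (hz : IsProfile n l z)
    (hlt : ∃ r ≤ n, y r < z r) : ∃ j, IsCorner n y true j (y j) ∧ y j < z j := by
  obtain ⟨r, hr, hrlt, hmin⟩ :=
    exists_lowest_lt (m := n + 1) (hlt.imp fun _ h => ⟨Nat.lt_succ_of_le h.1, h.2⟩)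
  have hpos : 1 ≤ r := Nat.one_le_iff_ne_zero.2 fun h0 => by
    rw [h0, hy.zero, hz.zero] at hrlt
    exact lt_irrefl _ hrlt
  have hmin_prev := hmin (r - 1) (by omega)
  have hy_last := hy.last
  have hz_last := hz.last
  refine ⟨r, ⟨hpos, by omega, rfl, ?_, fun hrn => ?_⟩, hrlt⟩
  · obtain rfl | hrn := eq_or_ne r n
    · omega
    · have hy_prev := hy.step (r - 1) (by omega)
      have hz_prev := hz.step (r - 1) (by omega)
      rw [Nat.sub_add_cancel hpos] at hy_prev hz_prev
      omega
  · have hmin_next := hmin (r + 1) (by omega)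
    obtain rfl | hrn' := eq_or_ne (r + 1) n
    · rw [Nat.add_sub_cancel] at hy_last hz_last
      omega
    · have hy_next := hy.step r (by omega)
      have hz_next := hz.step r (by omega)
      omega

theorem IsCorner.lower_le {j : ℕ} {m : ℤ} (hc : IsCorner n y true j m) (hy : IsProfile n l y)
    (hz : IsProfile n l z) (hle : ∀ r ≤ n, y r ≤ z r) (hlt : y j < z j) {r : ℕ} (hr : r ≤ n) :
    lower n y j r ≤ z r := by
  obtain ⟨h1, hjn, -, hprev, hnext⟩ := hc
  have hy_last := hy.last
  have hz_last := hz.last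
  have hpar_y := hy.parity_pred (h1.trans hjn)
  have hpar_z := hz.parity_pred (h1.trans hjn)
  obtain rfl | hrj := eq_or_ne r j
  · rw [lower_apply_self]
    split_ifs with hrn
    · rw [hrn] at hprev hlt ⊢
      omega
    · have hpar_y := hy.parity (hr.lt_of_ne hrn)
      have hpar_z := hz.parity (hr.lt_of_ne hrn)
      omega
  · by_cases hlast : j + 1 = n ∧ r = n
    · obtain ⟨rfl, rfl⟩ := hlast
      rw [lower_apply_last rfl]
      rw [Nat.add_sub_cancel] at *
      omega
    · rw [lower_apply_of_ne hrj (not_and.1 hlast)]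
      exact hle r hr

end SpinPoint

section Shape

variable {n : ℕ} {ε : ℝ}

/-- The common shape of the paths of one set `𝒫_{i,k}`: such a path is made of `card` halves, the
`c`-th one being a path of `𝒫_{N,l c}`, and `pos c r` is the index in the path of the `r`-th point
of the `c`-th half. The second half of a path is traversed backwards, whence the alternative in
`pos_succ`. -/
structure Shape (n : ℕ) (ε : ℝ) where
  card : ℕ
  l : Fin card → ℤ
  pos : Fin card → ℕ → ℕ
  path : (Fin card → ℕ → ℤ) → List (ℝ × ℝ)
  odd : ∀ c, l c % 2 = 1
  sub_mod : ∀ c c', c ≠ c' → (l c - l c') % 4 = 2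
  length_path : ∀ y, (path y).length = card * (n + 1)
  pos_lt : ∀ c, ∀ r ≤ n, pos c r < card * (n + 1)
  pos_inj : ∀ c c', ∀ r ≤ n, ∀ s ≤ n, pos c r = pos c' s → c = c' ∧ r = s
  exists_pos_eq : ∀ u < card * (n + 1), ∃ c, ∃ r ≤ n, pos c r = u
  pos_succ : ∀ c, (∀ r < n, pos c (r + 1) = pos c r + 1) ∨ ∀ r < n, pos c r = pos c (r + 1) + 1
  pt_path : ∀ y c, ∀ r ≤ n, pt (path y) (pos c r) = spinPt n ε (l c) (y c) r
  sum_map_path : ∀ y (g : ℝ × ℝ → ℤ),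
    ((path y).map g).sum = ∑ c, ((spinPath n ε (l c) (y c)).map g).sum

/-- The families of profiles of the halves of paths of shape `F`. By the condition on last points,
the halves do not cross. -/
structure IsFamily (F : Shape n ε) (y : Fin F.card → ℕ → ℤ) : Prop where
  profile : ∀ c, IsProfile n (F.l c) (y c)
  anti : StrictAnti fun c => key n (y c) n

namespace Shape

variable (F : Shape n ε) {y z : Fin F.card → ℕ → ℤ}

theorem pos_lt_length (y : Fin F.card → ℕ → ℤ) (c : Fin F.card) {r : ℕ} (hr : r ≤ n) :
    F.pos c r < (F.path y).length :=
  (F.pos_lt c r hr).trans_eq (F.length_path y).symm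

theorem forall_lt_length_iff (y : Fin F.card → ℕ → ℤ) {p : ℕ → Prop} :
    (∀ u < (F.path y).length, p u) ↔ ∀ c, ∀ r ≤ n, p (F.pos c r) := by
  refine ⟨fun h c r hr => h _ (F.pos_lt_length y c hr), fun h u hu => ?_⟩
  obtain ⟨c, r, hr, rfl⟩ := F.exists_pos_eq u (hu.trans_eq (F.length_path y))
  exact h c r hr

theorem mem_path_iff {a : ℝ × ℝ} :
    a ∈ F.path y ↔ ∃ c, ∃ r ≤ n, spinPt n ε (F.l c) (y c) r = a := by
  constructor
  · intro ha
    obtain ⟨u, hu, rfl⟩ := exists_pt_eq ha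
    obtain ⟨c, r, hr, rfl⟩ := F.exists_pos_eq u (hu.trans_eq (F.length_path y))
    exact ⟨c, r, hr, (F.pt_path y c r hr).symm⟩
  · rintro ⟨c, r, hr, rfl⟩
    rw [← F.pt_path y c r hr]
    exact pt_mem (F.pos_lt_length y c hr)

theorem neighbors_pos (c : Fin F.card) {j : ℕ} (h1 : 1 ≤ j) (hjn : j < n) :
    F.pos c (j - 1) = F.pos c j - 1 ∧ F.pos c (j + 1) = F.pos c j + 1 ∧ 1 ≤ F.pos c j ∨
      F.pos c (j - 1) = F.pos c j + 1 ∧ F.pos c (j + 1) = F.pos c j - 1 ∧ 1 ≤ F.pos c j := by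
  refine (F.pos_succ c).imp (fun h => ?_) fun h => ?_ <;>
  · have hprev := h (j - 1) (by omega)
    have hnext := h j hjn
    rw [Nat.sub_add_cancel h1] at hprev
    omega

theorem isExtremum_pos_iff (h0 : 0 < ε) (h1 : ε < 1 / 2) (h : IsFamily F y) (c : Fin F.card)
    {up : Bool} {j : ℕ} (hj : 1 ≤ j) (hjn : j < n) :
    (if up then (pt (F.path y) (F.pos c j)).2 < (pt (F.path y) (F.pos c j - 1)).2 ∧
        (pt (F.path y) (F.pos c j)).2 < (pt (F.path y) (F.pos c j + 1)).2
      else (pt (F.path y) (F.pos c j - 1)).2 < (pt (F.path y) (F.pos c j)).2 ∧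
        (pt (F.path y) (F.pos c j + 1)).2 < (pt (F.path y) (F.pos c j)).2) ↔
      IsCorner n (y c) up j (y c j) := by
  have hp := h.profile c
  have hlt {r s : ℕ} (hr : r ≤ n) (hs : s ≤ n) :
      (pt (F.path y) (F.pos c r)).2 < (pt (F.path y) (F.pos c s)).2 ↔
        key n (y c) r < key n (y c) s := by
    rw [F.pt_path y c r hr, F.pt_path y c s hs, hp.spinPt_lt_iff h0 h1 hp]
  have hprev := hp.key_lt_key_succ_iff (r := j - 1) (by omega)
  have hnext := hp.key_lt_key_succ_iff hjn
  rw [Nat.sub_add_cancel hj] at hprev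
  rw [IsCorner, and_iff_right hj, and_iff_right hjn.le, and_iff_right rfl, ← hprev.1, ← hprev.2,
    forall_prop_of_true hjn, forall_prop_of_true hjn, ← hnext.1, ← hnext.2,
    ← hlt hjn.le (by omega), ← hlt hjn.le (by omega), ← hlt (by omega) hjn.le,
    ← hlt (by omega) hjn.le]
  obtain ⟨hpos, hpos', -⟩ | ⟨hpos, hpos', -⟩ := F.neighbors_pos c hj hjn
  · rw [hpos, hpos']
  · rw [hpos, hpos', and_comm, and_comm (a := _ < (pt (F.path y) (F.pos c j)).2)]

/-- The path with profiles `y` has a corner at the site `(j, m)`, in one of its halves. The corners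
of a path are the corners of its halves, except that upper and lower corners at the same site
`(N, m)` cancel. -/
def HasCorner (y : Fin F.card → ℕ → ℤ) (up : Bool) (j : ℕ) (m : ℤ) : Prop :=
  ∃ c, IsCorner n (y c) up j m

theorem mem_Cp_path_of_lt (h0 : 0 < ε) (h1 : ε < 1 / 2) (h : IsFamily F y) {up : Bool} {j : ℕ}
    {m : ℤ} (hjn : j < n) :
    (j, m) ∈ Cp (.B n ε) (F.path y) up ↔ F.HasCorner y up j m := by
  constructor
  · rintro ⟨hX, ⟨u, hu, hu', hpt, -, -, -, hext⟩ | ⟨hj, -⟩⟩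
    · obtain ⟨c, r, hr, rfl⟩ := F.exists_pos_eq u (by rw [← F.length_path y]; omega)
      rw [F.pt_path y c r hr] at hpt
      have hsnd : (iotaB n (j, m)).2 = m := by rw [iotaB]; split_ifs <;> rfl
      rw [hsnd, (h.profile c).spinPt_eq_iotaB_iff (F.odd c) hr hjn] at hpt
      obtain ⟨rfl, rfl⟩ := hpt
      obtain ⟨hrn, -⟩ | ⟨hr1, -⟩ := hX
      · exact absurd hrn hjn.ne
      · exact ⟨c, (F.isExtremum_pos_iff h0 h1 h c hr1 hjn).1 hext⟩
    · exact absurd hj hjn.ne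
  · rintro ⟨c, hc⟩
    have hX := (h.profile c).mem_XB_of_isCorner (F.odd c) hc
    obtain ⟨hj, -, rfl, -⟩ := id hc
    have hiota := ((h.profile c).spinPt_eq_iotaB_iff (ε := ε) (F.odd c) hjn.le hjn).2 ⟨rfl, rfl⟩
    have hsnd : (iotaB n (j, y c j)).2 = y c j := by rw [iotaB]; split_ifs <;> rfl
    have hfst : (iotaB n (j, y c j)).1 = 2 * j ∨ (iotaB n (j, y c j)).1 = 4 * n - 2 - 2 * j := by
      rw [iotaB, if_neg hjn.ne, apply_ite Prod.fst]
      split_ifs <;> simp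
    refine ⟨hX, Or.inl ⟨F.pos c j, ?_, ?_, ?_, ?_, ?_, ?_,
      (F.isExtremum_pos_iff h0 h1 h c hj hjn).2 hc⟩⟩
    · have := F.neighbors_pos c hj hjn
      omega
    · have := F.neighbors_pos c hj hjn
      have := F.pos_lt_length y c (r := j - 1) (by omega)
      have := F.pos_lt_length y c (r := j + 1) (by omega)
      omega
    · rw [F.pt_path y c j hjn.le, hsnd, hiota]
    all_goals omega

theorem mem_Cp_path_last (hn : 2 ≤ n) (h0 : 0 < ε) (h1 : ε < 1 / 2) (h : IsFamily F y) {up : Bool}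
    {m : ℤ} : (n, m) ∈ Cp (.B n ε) (F.path y) up ↔
      F.HasCorner y up n m ∧ ¬F.HasCorner y (!up) n m := by
  have hmem (up : Bool) : (2 * (n : ℝ) - 1, (m : ℝ) + ε * ((if up then -1 else 1 : ℤ) : ℝ)) ∈
      F.path y ↔ F.HasCorner y up n m := by
    simp only [HasCorner, ← mem_spinPath_iff_isCorner (by omega) h0 h1 (h.profile _),
      mem_path_iff, spinPath, List.mem_map, List.mem_range, Nat.lt_succ_iff]
  have hup := hmem true
  have hdown := hmem false
  simp only [if_true, Bool.false_eq_true, if_false, Int.cast_neg, Int.cast_one, mul_neg, mul_one,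
    ← sub_eq_add_neg] at hup hdown
  have hiota : (iotaB n (n, m)).1 = 2 * n - 1 := by rw [iotaB, if_pos rfl]
  constructor
  · rintro ⟨-, ⟨u, -, -, -, -, hne, -⟩ | ⟨-, h⟩⟩
    · exact absurd hiota hne
    · cases up <;> simpa only [hup, hdown] using! h
  · rintro ⟨⟨c, hc⟩, hno⟩
    refine ⟨(h.profile c).mem_XB_of_isCorner (F.odd c) hc, Or.inr ⟨rfl, ?_⟩⟩
    have hc : F.HasCorner y up n m := ⟨c, hc⟩
    dsimp only
    rw [hup, hdown]
    cases up
    · exact ⟨hc, hno⟩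
    · exact ⟨hc, hno⟩

end Shape

end Shape

section Monomial

variable {n : ℕ} {ε : ℝ}

namespace Shape

variable (F : Shape n ε) {y z : Fin F.card → ℕ → ℤ}

theorem mon_path_apply (hn : 2 ≤ n) (h0 : 0 < ε) (h1 : ε < 1 / 2) (h : IsFamily F y) (j : ℕ)
    (m : ℤ) : mon (.B n ε) (F.path y) (j, m) =
      ind (F.HasCorner y true j m) - ind (F.HasCorner y false j m) := by
  rw [mon]
  obtain hjn | rfl | hjn := lt_trichotomy j n
  · rw [ind_congr (F.mem_Cp_path_of_lt h0 h1 h hjn), ind_congr (F.mem_Cp_path_of_lt h0 h1 h hjn)]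
  · rw [ind_congr (F.mem_Cp_path_last hn h0 h1 h), ind_congr (F.mem_Cp_path_last hn h0 h1 h)]
    simp only [Bool.not_true, Bool.not_false, ind]
    split_ifs <;> tauto
  · have hX : (j, m) ∉ XB n := by
      rintro (⟨hj, -⟩ | ⟨-, hj, -⟩) <;> dsimp only at hj <;> omega
    have hcorner (up : Bool) : ¬F.HasCorner y up j m := fun ⟨_, _, hle, _⟩ => hle.not_gt hjn
    rw [ind_false fun hmem => hX hmem.1, ind_false fun hmem => hX hmem.1, ind_false (hcorner true),
      ind_false (hcorner false)]

theorem height_path (y : Fin F.card → ℕ → ℤ) : height (OnLine n ε) (F.path y) =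
    ∑ c, height (OnLine n ε) (spinPath n ε (F.l c) (y c)) := by
  funext x
  rw [Finset.sum_apply]
  exact F.sum_map_path y _

theorem mon_path (hn : 2 ≤ n) (h0 : 0 < ε) (h1 : ε < 1 / 2) (h : IsFamily F y) :
    mon (.B n ε) (F.path y) = toA n (height (OnLine n ε) (F.path y)) := by
  funext ⟨j, m⟩
  have huniq (up : Bool) (c c' : Fin F.card) (hc : IsCorner n (y c) up j m)
      (hc' : IsCorner n (y c') up j m) : c = c' := by
    by_contra hne
    have hmod := (h.profile c).mod_eq_of_isCorner (h.profile c') hc hc'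
    have hmod' := F.sub_mod c c' hne
    omega
  rw [F.mon_path_apply hn h0 h1 h, F.height_path, map_sum, Finset.sum_apply,
    Finset.sum_congr rfl fun c _ =>
      (h.profile c).toA_height (by omega) h0 h1 (F.odd c) j m,
    Finset.sum_sub_distrib, sum_ind_eq_ind_exists (huniq true), sum_ind_eq_ind_exists (huniq false),
    HasCorner, HasCorner]

theorem weaklyAbove_path_iff (hn : 2 ≤ n) (h0 : 0 < ε) (h1 : ε < 1 / 2) (hy : IsFamily F y)
    (hz : IsFamily F z) :
    WeaklyAbove (F.path y) (F.path z) ↔ ∀ c, ∀ r ≤ n, y c r ≤ z c r := by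
  rw [WeaklyAbove, F.length_path z, ← F.length_path y, and_iff_right rfl, F.forall_lt_length_iff y]
  refine forall_congr' fun c => forall₂_congr fun r hr => ?_
  rw [F.pt_path y c r hr, F.pt_path z c r hr, ← not_lt,
    (hz.profile c).spinPt_lt_iff h0 h1 (hy.profile c), not_lt,
    (hy.profile c).key_le_key_iff (by omega) (hz.profile c)]

theorem height_path_of_mod_eq (hn : 2 ≤ n) (h0 : 0 < ε) (h1 : ε < 1 / 2) (hy : IsFamily F y)
    (c : Fin F.card) {j : ℕ} {m : ℤ} (hj : j ≤ n) (hpar : (m - (F.l c + 1 + 2 * (n + j))) % 4 = 0) :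
    height (OnLine n ε) (F.path y) (j, m) = ind (y c j < m) := by
  rw [height_path, Finset.sum_apply, Fintype.sum_eq_single c]
  · rw [height_spinPath (by omega) h0 h1 (F.odd c) (hy.profile c), ind_congr]
    rw [and_iff_right hj, and_iff_right hpar]
  · intro c' hc'
    have hmod := F.sub_mod c' c hc'
    rw [height_spinPath (by omega) h0 h1 (F.odd c') (hy.profile c'), ind_false]
    omega

theorem weaklyAbove_of_height_le (hn : 2 ≤ n) (h0 : 0 < ε) (h1 : ε < 1 / 2) (hy : IsFamily F y)
    (hz : IsFamily F z)
    (h : ∀ x, height (OnLine n ε) (F.path z) x ≤ height (OnLine n ε) (F.path y) x) :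
    WeaklyAbove (F.path y) (F.path z) := by
  refine (F.weaklyAbove_path_iff hn h0 h1 hy hz).2 fun c r hr =>
    (hy.profile c).le_of_forall_lt (by omega) (hz.profile c) (fun j hj m hpar hlt => ?_) hr
  have hle := h (j, m)
  rw [F.height_path_of_mod_eq hn h0 h1 hy c hj hpar, F.height_path_of_mod_eq hn h0 h1 hz c hj hpar,
    ind_true hlt] at hle
  by_contra hnot
  rw [ind_false hnot] at hle
  omega

theorem pt_fst_eq (y z : Fin F.card → ℕ → ℤ) :
    ∀ u < (F.path y).length, (pt (F.path y) u).1 = (pt (F.path z) u).1 := by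
  refine (F.forall_lt_length_iff y).2 fun c r hr => ?_
  rw [F.pt_path y c r hr, F.pt_path z c r hr, spinPt, spinPt]

theorem onLine_pt (hn : 2 ≤ n) (h0 : 0 < ε) (h1 : ε < 1 / 2) (hy : IsFamily F y)
    (hz : IsFamily F z) : ∀ u < (F.path y).length, ∀ x,
      OnLine n ε (pt (F.path y) u) x → OnLine n ε (pt (F.path z) u) x := by
  refine (F.forall_lt_length_iff y).2 fun c r hr x => ?_
  rw [F.pt_path y c r hr, F.pt_path z c r hr,
    onLine_spinPt_iff (by omega) h0 h1 (F.odd c) (hy.profile c) hr,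
    onLine_spinPt_iff (by omega) h0 h1 (F.odd c) (hz.profile c) hr]
  exact id

theorem pt_eq_of_notMem_W (hn : 2 ≤ n) (h0 : 0 < ε) (h1 : ε < 1 / 2) (hy : IsFamily F y)
    (hz : IsFamily F z) : ∀ u < (F.path y).length, ∀ x ∉ W (.B n ε),
      OnLine n ε (pt (F.path y) u) x → pt (F.path y) u = pt (F.path z) u := by
  refine (F.forall_lt_length_iff y).2 fun c r hr ⟨j, m⟩ hx hline => ?_
  rw [F.pt_path y c r hr] at hline ⊢
  rw [onLine_spinPt_iff (by omega) h0 h1 (F.odd c) (hy.profile c) hr] at hline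
  rw [mem_W_iff hn] at hx
  have hodd := F.odd c
  obtain rfl : r = 0 := by omega
  rw [F.pt_path z c 0 hr, spinPt_of_ne (by omega), spinPt_of_ne (by omega), (hy.profile c).zero,
    (hz.profile c).zero]

end Shape

end Monomial

section Lowering

variable {n : ℕ} {ε : ℝ} {l : ℤ} {y y' : ℕ → ℤ}

theorem IsProfile.ind_sub_eq_neg_Y (hn : 2 ≤ n) (h0 : 0 < ε) (h1 : ε < 1 / 2) (hl : l % 2 = 1)
    (hy : IsProfile n l y) (hy' : IsProfile n l y') {r : ℕ} (hr : r ≤ n) {m : ℤ}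
    (hm : (m - (l + 1 + 2 * (n + r))) % 4 = 0) (hy_lt : y r < m) (hle_y : m ≤ y r + 4)
    (hle_y' : m ≤ y' r) (hy'_lt : y' r < m + 4) (x : ℕ × ℤ) :
    ind (OnLine n ε (spinPt n ε l y' r) x ∧ (spinPt n ε l y' r).2 < x.2) -
      ind (OnLine n ε (spinPt n ε l y r) x ∧ (spinPt n ε l y r).2 < x.2) = -Y (r, m) x := by
  obtain ⟨a, b⟩ := x
  rw [ind_congr (onLine_spinPt_and_lt_iff (by omega) h0 h1 hl hy' hr),
    ind_congr (onLine_spinPt_and_lt_iff (by omega) h0 h1 hl hy hr)]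
  simp only [ind, Y, Prod.mk.injEq]
  split_ifs <;> omega

theorem IsProfile.ind_sub_eq_zero (hn : 2 ≤ n) (h0 : 0 < ε) (h1 : ε < 1 / 2) (hl : l % 2 = 1)
    (hy : IsProfile n l y) (hy' : IsProfile n l y') {r : ℕ} (hr : r ≤ n) {m : ℤ}
    (hm : (m - (l + 1 + 2 * (n + r))) % 4 = 0) (hle_y : m ≤ y r) (hy_lt : y r < m + 4)
    (hle_y' : m ≤ y' r) (hy'_lt : y' r < m + 4) (x : ℕ × ℤ) :
    ind (OnLine n ε (spinPt n ε l y' r) x ∧ (spinPt n ε l y' r).2 < x.2) -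
      ind (OnLine n ε (spinPt n ε l y r) x ∧ (spinPt n ε l y r).2 < x.2) = 0 := by
  rw [ind_congr (onLine_spinPt_and_lt_iff (by omega) h0 h1 hl hy' hr),
    ind_congr (onLine_spinPt_and_lt_iff (by omega) h0 h1 hl hy hr), sub_eq_zero]
  exact ind_congr (by omega)

theorem IsProfile.ind_sub_of_iotaB (hn : 2 ≤ n) (h0 : 0 < ε) (h1 : ε < 1 / 2) (hl : l % 2 = 1)
    (hy : IsProfile n l y) (hy' : IsProfile n l y') {r j : ℕ} (hr : r ≤ n) (hjn : j < n) {m : ℤ}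
    {t : ℝ} (h : spinPt n ε l y r = (((iotaB n (j, m - 2)).1 : ℝ), (m : ℝ) - 2))
    (h' : spinPt n ε l y' r = (t, (m : ℝ) + 2)) (x : ℕ × ℤ) :
    ind (OnLine n ε (spinPt n ε l y' r) x ∧ (spinPt n ε l y' r).2 < x.2) -
      ind (OnLine n ε (spinPt n ε l y r) x ∧ (spinPt n ε l y r).2 < x.2) = -Y (j, m) x := by
  have hcast : (m : ℝ) - 2 = ((m - 2 : ℤ) : ℝ) := by push_cast; rfl
  rw [hcast, hy.spinPt_eq_iotaB_iff hl hr hjn] at h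
  obtain ⟨rfl, hym⟩ := h
  have hpar := hy.parity hjn
  have hym' : y' r = m + 2 := by
    rw [spinPt_of_ne hjn.ne] at h'
    have hsnd : (y' r : ℝ) = m + 2 := congrArg Prod.snd h'
    exact_mod_cast hsnd
  exact hy.ind_sub_eq_neg_Y hn h0 h1 hl hy' hr (by omega) (by omega) (by omega) (by omega)
    (by omega) x

theorem IsProfile.ind_sub_of_last (hn : 2 ≤ n) (h0 : 0 < ε) (h1 : ε < 1 / 2) (hl : l % 2 = 1)
    (hy : IsProfile n l y) (hy' : IsProfile n l y') {r : ℕ} (hr : r ≤ n) {m : ℤ}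
    (h : spinPt n ε l y r = (2 * (n : ℝ) - 1, (m : ℝ) - 1 - ε))
    (h' : spinPt n ε l y' r = (2 * (n : ℝ) - 1, (m : ℝ) + 1 + ε)) (x : ℕ × ℤ) :
    ind (OnLine n ε (spinPt n ε l y' r) x ∧ (spinPt n ε l y' r).2 < x.2) -
      ind (OnLine n ε (spinPt n ε l y r) x ∧ (spinPt n ε l y r).2 < x.2) = -Y (n, m) x := by
  have hcast : (m : ℝ) - 1 - ε = ((m - 1 : ℤ) : ℝ) + ε * ((-1 : ℤ) : ℝ) := by push_cast; ring
  have hcast' : (m : ℝ) + 1 + ε = ((m + 1 : ℤ) : ℝ) + ε * ((1 : ℤ) : ℝ) := by push_cast; ring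
  rw [hcast, hy.spinPt_eq_last_iff h0 h1 (by norm_num) hr] at h
  rw [hcast', hy'.spinPt_eq_last_iff h0 h1 (by norm_num) hr] at h'
  obtain ⟨rfl, hym, htilt⟩ := h
  have hpar := hy.parity_pred (by omega)
  exact hy.ind_sub_eq_neg_Y hn h0 h1 hl hy' hr (by omega) (by omega) (by omega) (by omega)
    (by omega) x

theorem IsProfile.ind_sub_of_last_flip (hn : 2 ≤ n) (h0 : 0 < ε) (h1 : ε < 1 / 2)
    (hl : l % 2 = 1) (hy : IsProfile n l y) (hy' : IsProfile n l y') {r : ℕ} (hr : r ≤ n) {m : ℤ}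
    (h : spinPt n ε l y r = (2 * (n : ℝ) - 1, (m : ℝ) - 1 + ε))
    (h' : spinPt n ε l y' r = (2 * (n : ℝ) - 1, (m : ℝ) + 1 - ε)) (x : ℕ × ℤ) :
    ind (OnLine n ε (spinPt n ε l y' r) x ∧ (spinPt n ε l y' r).2 < x.2) -
      ind (OnLine n ε (spinPt n ε l y r) x ∧ (spinPt n ε l y r).2 < x.2) = 0 := by
  have hcast : (m : ℝ) - 1 + ε = ((m - 1 : ℤ) : ℝ) + ε * ((1 : ℤ) : ℝ) := by push_cast; ring
  have hcast' : (m : ℝ) + 1 - ε = ((m + 1 : ℤ) : ℝ) + ε * ((-1 : ℤ) : ℝ) := by push_cast; ring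
  rw [hcast, hy.spinPt_eq_last_iff h0 h1 (by norm_num) hr] at h
  rw [hcast', hy'.spinPt_eq_last_iff h0 h1 (by norm_num) hr] at h'
  obtain ⟨rfl, hym, htilt⟩ := h
  have hpar := hy.parity_pred (by omega)
  exact hy.ind_sub_eq_zero hn h0 h1 hl hy' hr (m := m - 2) (by omega) (by omega) (by omega)
    (by omega) (by omega) x

namespace Shape

variable (F : Shape n ε) {y y' : Fin F.card → ℕ → ℤ}

theorem exists_spinPt_eq_of_lt {u : ℕ} (hu : u < (F.path y).length) {a a' : ℝ × ℝ}
    (h : pt (F.path y) u = a) (h' : pt (F.path y') u = a') :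
    ∃ c, ∃ r ≤ n, spinPt n ε (F.l c) (y c) r = a ∧ spinPt n ε (F.l c) (y' c) r = a' := by
  obtain ⟨c, r, hr, rfl⟩ := F.exists_pos_eq u (hu.trans_eq (F.length_path y))
  exact ⟨c, r, hr, (F.pt_path y c r hr).symm.trans h, (F.pt_path y' c r hr).symm.trans h'⟩

theorem height_of_loweredTo (hn : 2 ≤ n) (h0 : 0 < ε) (h1 : ε < 1 / 2) (hy : IsFamily F y)
    (hy' : IsFamily F y') {i : ℕ} {k : ℤ} {x : ℕ × ℤ} (hx : x ∈ W (.B n ε))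
    (h : LoweredTo (.B n ε) i k x.1 x.2 (F.path y) (F.path y')) :
    height (OnLine n ε) (F.path y') = height (OnLine n ε) (F.path y) - Y x := by
  obtain ⟨j, m⟩ := x
  obtain ⟨-, hjn, -⟩ := (mem_W_iff hn).1 hx
  obtain ⟨-, -, -, h⟩ := h
  funext z
  suffices hdiff : height (OnLine n ε) (F.path y') z - height (OnLine n ε) (F.path y) z =
      -Y (j, m) z by
    rw [Pi.sub_apply]
    linarith
  rw [height, height]
  dsimp only at h
  split_ifs at h with hj hj'
  · subst hj
    rw [h.sum_map]
    obtain ⟨u, hu, hq, -, hq', -⟩ := h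
    obtain ⟨c, r, hr, ha, ha'⟩ := F.exists_spinPt_eq_of_lt hu hq hq'
    rw [← ha, ← ha']
    exact (hy.profile c).ind_sub_of_last hn h0 h1 (F.odd c) (hy'.profile c) hr ha ha' z
  · rw [h.sum_map]
    obtain ⟨u, v, hu, hv, -, hq, hs, -, hq', hs', -⟩ := h
    obtain ⟨c, r, hr, ha, ha'⟩ := F.exists_spinPt_eq_of_lt hu hq hq'
    obtain ⟨d, s, hsn, hb, hb'⟩ := F.exists_spinPt_eq_of_lt hv hs hs'
    rw [← ha, ← ha', ← hb, ← hb',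
      (hy.profile c).ind_sub_of_iotaB hn h0 h1 (F.odd c) (hy'.profile c) hr (by omega) ha ha' z,
      (hy.profile d).ind_sub_of_last_flip hn h0 h1 (F.odd d) (hy'.profile d) hsn hb hb' z, add_zero]
  · rw [h.sum_map]
    obtain ⟨u, hu, hq, -, hq', -⟩ := h
    obtain ⟨c, r, hr, ha, ha'⟩ := F.exists_spinPt_eq_of_lt hu hq hq'
    rw [← ha, ← ha']
    exact (hy.profile c).ind_sub_of_iotaB hn h0 h1 (F.odd c) (hy'.profile c) hr (by omega) ha ha' z

end Shape

end Lowering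

section Corner

variable {n : ℕ} {ε : ℝ} {l : ℤ} {y : ℕ → ℤ}

theorem spinPt_lower_of_ne {j r : ℕ} (hrj : r ≠ j) (hr : r = n → j + 1 ≠ n) (hjn : j ≤ n) :
    spinPt n ε l (lower n y j) r = spinPt n ε l y r := by
  have hlower : lower n y j r = y r := lower_apply_of_ne hrj fun hj hrn => hr hrn hj
  have htilt : tilt n (lower n y j) r = tilt n y r := by
    obtain rfl | hrn := eq_or_ne r n
    · rw [tilt_self, tilt_self, hlower, lower_apply_of_ne (r := r - 1) (by omega) (by omega)]
    · rw [tilt_of_ne hrn, tilt_of_ne hrn]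
  rw [spinPt, spinPt, hlower, htilt]

theorem IsProfile.spinPt_lower_self (h : IsProfile n l y) (hl : l % 2 = 1) {j : ℕ} (hjn : j < n) :
    spinPt n ε l (lower n y j) j = (((iotaB n (j, y j)).1 : ℝ), (y j : ℝ) + 4) := by
  have hpt := (h.spinPt_eq_iotaB_iff (ε := ε) hl hjn.le hjn).2 ⟨rfl, rfl⟩
  rw [spinPt_of_ne hjn.ne, Prod.mk.injEq] at hpt
  rw [spinPt_of_ne hjn.ne, hpt.1, lower_apply_self, if_neg hjn.ne]
  push_cast
  rfl

namespace Shape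

variable (F : Shape n ε) {y z : Fin F.card → ℕ → ℤ} {c : Fin F.card} {j : ℕ}

theorem isFamily_lower (hn : 1 ≤ n) (hy : IsFamily F y) (hz : IsFamily F z)
    (hc : IsCorner n (y c) true j (y c j)) (hle : ∀ r ≤ n, lower n (y c) j r ≤ z c r)
    (hge : ∀ c' < c, ∀ r ≤ n, z c' r ≤ y c' r) :
    IsFamily F (Function.update y c (lower n (y c) j)) := by
  have hlower := hc.isProfile_lower (hy.profile c)
  refine ⟨fun c' => ?_, fun a b hab => ?_⟩
  · obtain rfl | hne := eq_or_ne c' c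
    · rwa [Function.update_self]
    · rw [Function.update_of_ne hne]
      exact hy.profile c'
  dsimp only
  obtain rfl | hbc := eq_or_ne b c
  · rw [Function.update_self, Function.update_of_ne hab.ne]
    calc key n (lower n (y b) j) n ≤ key n (z b) n :=
          (hlower.key_le_key_iff hn (hz.profile b)).2 (hle n le_rfl)
      _ < key n (z a) n := hz.anti hab
      _ ≤ key n (y a) n :=
          ((hz.profile a).key_le_key_iff hn (hy.profile a)).2 (hge a hab n le_rfl)
  · rw [Function.update_of_ne hbc]
    obtain rfl | hac := eq_or_ne a c
    · rw [Function.update_self]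
      exact (hy.anti hab).trans_le <|
        ((hy.profile a).key_le_key_iff hn hlower).2 (le_lower n (y a) j n)
    · rw [Function.update_of_ne hac]
      exact hy.anti hab

theorem canLower_of_lt (h0 : 0 < ε) (h1 : ε < 1 / 2) (hy : IsFamily F y)
    (hc : IsCorner n (y c) true j (y c j)) (hjn : j < n) :
    CanLower (.B n ε) (F.path y) j (y c j + 2) := by
  rw [CanLower, rr, if_neg hjn.ne, F.mem_Cp_path_of_lt h0 h1 hy hjn,
    F.mem_Cp_path_of_lt h0 h1 hy hjn]
  refine ⟨⟨c, by simpa using hc⟩, ?_⟩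
  rintro ⟨c', -, -, hc', -⟩
  have hpar := (hy.profile c).parity hjn
  have hpar' := (hy.profile c').parity hjn
  push_cast at hc'
  obtain rfl | hne := eq_or_ne c' c
  · omega
  · have hmod := F.sub_mod c' c hne
    omega

theorem canLower_last (hn : 2 ≤ n) (h0 : 0 < ε) (h1 : ε < 1 / 2) (hy : IsFamily F y)
    (hc : IsCorner n (y c) true n (y c n))
    (hy' : IsFamily F (Function.update y c (lower n (y c) n))) :
    CanLower (.B n ε) (F.path y) n (y c n + 1) := by
  have hlast := (hy.profile c).last
  obtain ⟨-, -, -, hup, -⟩ := id hc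
  -- The lowered half must not cross those below it, which are thus too far down for a corner there.
  have hkey {c' : Fin F.card} (hlt : key n (y c) n < key n (y c') n) :
      4 * y c n + 9 < key n (y c') n := by
    have hcc' : c' < c := hy.anti.lt_iff_gt.1 hlt
    have := hy'.anti hcc'
    dsimp only at this
    rw [Function.update_self, Function.update_of_ne hcc'.ne, key_self,
      lower_apply_self, if_pos rfl, lower_apply_of_ne (by omega) (by omega)] at this
    omega
  have hno {up : Bool} {m : ℤ} (hm : m = y c n ∧ up = false ∨ m = y c n + 2 ∧ up = true) :
      ¬F.HasCorner y up n m := by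
    rintro ⟨c', -, -, hc', hup'⟩
    have hlast' := (hy.profile c').last
    have := @hkey c'
    rw [key_self, key_self] at this
    obtain ⟨rfl, rfl⟩ | ⟨rfl, rfl⟩ := hm
    · simp only [Bool.false_eq_true, if_false] at hup'
      omega
    · simp only [if_true] at hup'
      omega
  rw [CanLower, rr, if_pos rfl, F.mem_Cp_path_last hn h0 h1 hy, F.mem_Cp_path_last hn h0 h1 hy]
  refine ⟨⟨⟨c, by simpa using hc⟩, hno (by simp)⟩, fun h => hno (Or.inr ⟨?_, rfl⟩) h.1⟩
  push_cast
  ring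

theorem pt_path_update_lower_of_ne {u : ℕ} (hu : u < (F.path y).length) (hjn : j ≤ n)
    (hne : u ≠ F.pos c j) (hne' : j + 1 = n → u ≠ F.pos c n) :
    pt (F.path (Function.update y c (lower n (y c) j))) u = pt (F.path y) u := by
  obtain ⟨c', r, hr, rfl⟩ := F.exists_pos_eq u (hu.trans_eq (F.length_path y))
  rw [F.pt_path _ c' r hr, F.pt_path y c' r hr]
  obtain rfl | hcc' := eq_or_ne c' c
  · rw [Function.update_self]
    refine spinPt_lower_of_ne (fun hrj => hne (by rw [hrj])) (fun hrn hj => hne' hj ?_) hjn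
    rw [hrn]
  · rw [Function.update_of_ne hcc']

theorem replace1_path_last (h0 : 0 < ε) (h1 : ε < 1 / 2) (hy : IsFamily F y)
    (hc : IsCorner n (y c) true n (y c n)) :
    Replace1 (F.path y) (F.path (Function.update y c (lower n (y c) n)))
      (2 * (n : ℝ) - 1, ((y c n + 1 : ℤ) : ℝ) - 1 - ε)
      (2 * (n : ℝ) - 1, ((y c n + 1 : ℤ) : ℝ) + 1 + ε) := by
  have hlower := hc.isProfile_lower (hy.profile c)
  have hlast := (hy.profile c).last
  obtain ⟨hn, -, -, hup, -⟩ := hc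
  refine ⟨F.pos c n, F.pos_lt_length y c le_rfl, ?_, ?_, ?_, fun u hu hne =>
    F.pt_path_update_lower_of_ne hu le_rfl hne (by omega)⟩
  · have hcast : ((y c n + 1 : ℤ) : ℝ) - 1 - ε = (y c n : ℝ) + ε * ((-1 : ℤ) : ℝ) := by
      push_cast
      ring
    rw [F.pt_path y c n le_rfl, hcast,
      (hy.profile c).spinPt_eq_last_iff h0 h1 (by norm_num) le_rfl]
    omega
  · rw [F.length_path, F.length_path]
  · have hcast : ((y c n + 1 : ℤ) : ℝ) + 1 + ε =
        ((y c n + 2 : ℤ) : ℝ) + ε * ((1 : ℤ) : ℝ) := by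
      push_cast
      ring
    rw [F.pt_path _ c n le_rfl, Function.update_self, hcast,
      hlower.spinPt_eq_last_iff h0 h1 (by norm_num) le_rfl, lower_apply_self, if_pos rfl,
      lower_apply_of_ne (by omega) (by omega)]
    omega

theorem pt_path_iotaB (hy : IsFamily F y) (hjn : j < n) :
    pt (F.path y) (F.pos c j) =
      (((iotaB n (j, y c j + 2 - 2)).1 : ℝ), ((y c j + 2 : ℤ) : ℝ) - 2) := by
  rw [F.pt_path y c j hjn.le, add_sub_cancel_right,
    ((hy.profile c).spinPt_eq_iotaB_iff (F.odd c) hjn.le hjn).2 ⟨rfl, rfl⟩]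
  push_cast
  rw [add_sub_cancel_right]

theorem pt_path_update_lower_self (hy : IsFamily F y) (hjn : j < n) :
    pt (F.path (Function.update y c (lower n (y c) j))) (F.pos c j) =
      (((iotaB n (j, y c j + 2 - 2)).1 : ℝ), ((y c j + 2 : ℤ) : ℝ) + 2) := by
  rw [F.pt_path _ c j hjn.le, Function.update_self, add_sub_cancel_right,
    (hy.profile c).spinPt_lower_self (F.odd c) hjn]
  push_cast
  rw [add_assoc, two_add_two_eq_four]

theorem replace1_path_of_lt (hy : IsFamily F y) (hjn : j + 1 < n) :
    Replace1 (F.path y) (F.path (Function.update y c (lower n (y c) j)))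
      (((iotaB n (j, y c j + 2 - 2)).1 : ℝ), ((y c j + 2 : ℤ) : ℝ) - 2)
      (((iotaB n (j, y c j + 2 - 2)).1 : ℝ), ((y c j + 2 : ℤ) : ℝ) + 2) :=
  ⟨F.pos c j, F.pos_lt_length y c (by omega), F.pt_path_iotaB hy (by omega),
    by rw [F.length_path, F.length_path], F.pt_path_update_lower_self hy (by omega),
    fun _ hu hne => F.pt_path_update_lower_of_ne hu (by omega) hne fun hj => absurd hj hjn.ne⟩

theorem replace2_path_pred (h0 : 0 < ε) (h1 : ε < 1 / 2) (hy : IsFamily F y)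
    (hc : IsCorner n (y c) true j (y c j)) (hjn : j + 1 = n) :
    Replace2 (F.path y) (F.path (Function.update y c (lower n (y c) j)))
      (((iotaB n (j, y c j + 2 - 2)).1 : ℝ), ((y c j + 2 : ℤ) : ℝ) - 2)
      (((iotaB n (j, y c j + 2 - 2)).1 : ℝ), ((y c j + 2 : ℤ) : ℝ) + 2)
      (2 * (n : ℝ) - 1, ((y c j + 2 : ℤ) : ℝ) - 1 + ε)
      (2 * (n : ℝ) - 1, ((y c j + 2 : ℤ) : ℝ) + 1 - ε) := by
  have hlower := hc.isProfile_lower (hy.profile c)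
  have hlast := (hy.profile c).last
  obtain ⟨-, -, -, -, hnext⟩ := hc
  have hpred : n - 1 = j := by omega
  rw [hjn, ← hpred] at hnext
  refine ⟨F.pos c j, F.pos c n, F.pos_lt_length y c (by omega), F.pos_lt_length y c le_rfl,
    fun h => ?_, F.pt_path_iotaB hy (by omega), ?_, by rw [F.length_path, F.length_path],
    F.pt_path_update_lower_self hy (by omega), ?_, fun _ hu hne hne' =>
      F.pt_path_update_lower_of_ne hu (by omega) hne fun _ => hne'⟩
  · have := (F.pos_inj c c j (by omega) n le_rfl h).2
    omega
  · have hcast : ((y c j + 2 : ℤ) : ℝ) - 1 + ε = ((y c j + 1 : ℤ) : ℝ) + ε * ((1 : ℤ) : ℝ) := by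
      push_cast
      ring
    rw [F.pt_path y c n le_rfl, hcast,
      (hy.profile c).spinPt_eq_last_iff h0 h1 (by norm_num) le_rfl, ← hpred]
    omega
  · have hcast : ((y c j + 2 : ℤ) : ℝ) + 1 - ε =
        ((y c j + 3 : ℤ) : ℝ) + ε * ((-1 : ℤ) : ℝ) := by
      push_cast
      ring
    rw [F.pt_path _ c n le_rfl, Function.update_self, hcast,
      hlower.spinPt_eq_last_iff h0 h1 (by norm_num) le_rfl, lower_apply_last hjn, hpred,
      lower_apply_self, if_neg (by omega), ← hpred]
    omega

theorem loweredTo_path (hn : 2 ≤ n) (h0 : 0 < ε) (h1 : ε < 1 / 2) {i : ℕ} {k : ℤ}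
    (hF : ∀ p, p ∈ pathsB n ε i k ↔ ∃ y, IsFamily F y ∧ p = F.path y) (hy : IsFamily F y)
    (hc : IsCorner n (y c) true j (y c j))
    (hy' : IsFamily F (Function.update y c (lower n (y c) j))) :
    LoweredTo (.B n ε) i k j (y c j + if j = n then 1 else 2) (F.path y)
      (F.path (Function.update y c (lower n (y c) j))) := by
  refine ⟨(hF _).2 ⟨y, hy, rfl⟩, (hF _).2 ⟨_, hy', rfl⟩, ?_⟩
  dsimp only
  obtain hjn | hjn := hc.2.1.eq_or_lt
  · rw [if_pos hjn, if_pos hjn]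
    rw [hjn] at hc hy' ⊢
    exact ⟨F.canLower_last hn h0 h1 hy hc hy', F.replace1_path_last h0 h1 hy hc⟩
  · rw [if_neg hjn.ne, if_neg hjn.ne]
    refine ⟨F.canLower_of_lt h0 h1 hy hc hjn, ?_⟩
    split_ifs with hpred
    · exact F.replace2_path_pred h0 h1 hy hc (by omega)
    · exact F.replace1_path_of_lt hy (by omega)

theorem exists_lower (hn : 2 ≤ n) (h0 : 0 < ε) (h1 : ε < 1 / 2) {i : ℕ} {k : ℤ}
    (hF : ∀ p, p ∈ pathsB n ε i k ↔ ∃ y, IsFamily F y ∧ p = F.path y) (hy : IsFamily F y)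
    (hz : IsFamily F z) (hle : WeaklyAbove (F.path y) (F.path z)) (hne : F.path y ≠ F.path z) :
    ∃ x ∈ W (.B n ε), ∃ p, LoweredTo (.B n ε) i k x.1 x.2 (F.path y) p ∧
      WeaklyAbove p (F.path z) := by
  have hlen := hle.1
  rw [F.weaklyAbove_path_iff hn h0 h1 hy hz] at hle
  have hlt : {c | ∃ r ≤ n, y c r < z c r}.Nonempty := by
    by_contra hempty
    have heq (c) {r} (hr : r ≤ n) : y c r = z c r := (hle c r hr).antisymm <|
      not_lt.1 fun hlt => hempty ⟨c, r, hr, hlt⟩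
    refine hne (ext_pt hlen ((F.forall_lt_length_iff y).2 fun c r hr => ?_))
    rw [F.pt_path y c r hr, F.pt_path z c r hr, spinPt, spinPt, tilt, tilt, heq c hr,
      heq c le_rfl, heq c (n.sub_le 1)]
  obtain ⟨c, hlt, hmin⟩ := wellFounded_lt.has_min _ hlt
  obtain ⟨j, hc, hj⟩ := (hy.profile c).exists_upper_corner (hz.profile c) hlt
  have hle_lower : ∀ r ≤ n, lower n (y c) j r ≤ z c r := fun r hr =>
    hc.lower_le (hy.profile c) (hz.profile c) (hle c) hj hr
  have hy' := F.isFamily_lower (by omega) hy hz hc hle_lower fun c' hc' r hr =>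
    not_lt.1 fun hlt' => hmin c' ⟨r, hr, hlt'⟩ hc'
  refine ⟨(j, y c j + if j = n then 1 else 2), (mem_W_iff hn).2 ⟨hc.1, hc.2.1, ?_⟩, _,
    F.loweredTo_path hn h0 h1 hF hy hc hy',
    (F.weaklyAbove_path_iff hn h0 h1 hy' hz).2 fun c' r hr => ?_⟩
  · have hX := (hy.profile c).mem_XB_of_isCorner (F.odd c) hc
    obtain ⟨hjn, hX⟩ | ⟨-, hjn, hX⟩ := hX
    · dsimp only at hjn hX
      rw [if_pos hjn]
      omega
    · dsimp only at hjn hX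
      rw [if_neg hjn.ne]
      omega
  · obtain rfl | hcc' := eq_or_ne c' c
    · rw [Function.update_self]
      exact hle_lower r hr
    · rw [Function.update_of_ne hcc']
      exact hle c' r hr

end Shape

end Corner

section Model

variable {n : ℕ} {ε : ℝ}

/-- The shape of the paths of `𝒫_{N,ℓ}`. -/
noncomputable def spinShape (n : ℕ) (ε : ℝ) (l : ℤ) (hl : l % 2 = 1) : Shape n ε where
  card := 1
  l _ := l
  pos _ r := r
  path y := spinPath n ε l (y 0)
  odd _ := hl
  sub_mod c c' h := absurd (Subsingleton.elim c c') h
  length_path y := by rw [length_spinPath, one_mul]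
  pos_lt _ r hr := by rwa [one_mul, Nat.lt_succ_iff]
  pos_inj c c' _ _ _ _ h := ⟨Subsingleton.elim c c', h⟩
  exists_pos_eq u hu := ⟨0, u, by omega, rfl⟩
  pos_succ _ := Or.inl fun _ _ => rfl
  pt_path y c r hr := by rw [pt_spinPath hr, Subsingleton.elim c 0]
  sum_map_path y g := by rw [Fin.sum_univ_one]

theorem mem_pathsB_last_iff (hn : 2 ≤ n) {l : ℤ} (hl : l % 2 = 1) {p : List (ℝ × ℝ)} :
    p ∈ pathsB n ε n l ↔
      ∃ y, IsFamily (spinShape n ε l hl) y ∧ p = (spinShape n ε l hl).path y := by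
  rw [pathsB, if_pos rfl]
  constructor
  · intro hp
    obtain ⟨y, hy, rfl⟩ := exists_eq_spinPath hn hp
    exact ⟨fun _ => y, ⟨fun _ => hy, Subsingleton.strictAnti (α := Fin 1) _⟩, rfl⟩
  · rintro ⟨y, hy, rfl⟩
    exact spinPath_mem_pathsBspin (by omega) (hy.profile (0 : Fin 1))

/-- The indices `ℓ` of the sets `𝒫_{N,ℓ}` containing the halves of the paths of `𝒫_{i,k}`, with
`i < N`. -/
def halfIndex (n i : ℕ) (k : ℤ) (c : Fin 2) : ℤ :=
  if c = 0 then k - (2 * n - 2 * i - 1) else k + (2 * n - 2 * i - 1)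

/-- The indices, in a path of `𝒫_{i,k}` with `i < N`, of the points of its two halves. -/
def halfPos (n : ℕ) (c : Fin 2) (r : ℕ) : ℕ := if c = 0 then r else 2 * n + 1 - r

/-- The shape of the paths of `𝒫_{i,k}` with `i < N`. -/
noncomputable def pairShape (n : ℕ) (ε : ℝ) (i : ℕ) (k : ℤ) (hk : k % 2 = 0) : Shape n ε where
  card := 2
  l := halfIndex n i k
  pos := halfPos n
  path y := spinPath n ε (halfIndex n i k 0) (y 0) ++
    (spinPath n ε (halfIndex n i k 1) (y 1)).reverse
  odd c := by
    rw [halfIndex]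
    split_ifs <;> omega
  sub_mod c c' h := by
    rw [halfIndex, halfIndex]
    split_ifs <;> omega
  length_path y := by
    rw [List.length_append, List.length_reverse, length_spinPath, length_spinPath, two_mul]
  pos_lt c r hr := by
    rw [halfPos]
    split_ifs <;> omega
  pos_inj c c' r hr s hs h := by grind [halfPos]
  exists_pos_eq u hu := by
    by_cases h : u ≤ n
    · exact ⟨0, u, h, if_pos rfl⟩
    · refine ⟨1, 2 * n + 1 - u, by omega, (if_neg one_ne_zero).trans ?_⟩
      omega
  pos_succ c := by
    obtain rfl | hc := eq_or_ne c 0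
    · exact Or.inl fun _ _ => rfl
    · refine Or.inr fun r hr => ?_
      rw [halfPos, halfPos, if_neg hc, if_neg hc]
      omega
  pt_path y := by
    refine Fin.forall_fin_two.2 ⟨fun r hr => ?_, fun r hr => ?_⟩
    · rw [halfPos, if_pos rfl, pt_append_left (by rw [length_spinPath]; omega), pt_spinPath hr]
    · have hpos : halfPos n 1 r = (spinPath n ε (halfIndex n i k 0) (y 0)).length +
          ((spinPath n ε (halfIndex n i k 1) (y 1)).length - 1 - r) := by
        rw [halfPos, if_neg one_ne_zero, length_spinPath, length_spinPath]
        omega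
      rw [hpos, pt_append_reverse (by rw [length_spinPath]; omega), pt_spinPath hr]
  sum_map_path y g := by
    rw [Fin.sum_univ_two, List.map_append, List.sum_append, List.map_reverse, List.sum_reverse]

theorem mem_pathsB_iff_of_lt (hn : 2 ≤ n) (h0 : 0 < ε) (h1 : ε < 1 / 2) {i : ℕ} (hi : i < n)
    {k : ℤ} (hk : k % 2 = 0) {p : List (ℝ × ℝ)} : p ∈ pathsB n ε i k ↔
      ∃ y, IsFamily (pairShape n ε i k hk) y ∧ p = (pairShape n ε i k hk).path y := by
  have hanti {l l' : ℤ} {y : Fin 2 → ℕ → ℤ} (h : IsProfile n l (y 0))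
      (h' : IsProfile n l' (y 1)) :
      (pt (spinPath n ε l (y 0)) n).1 = (pt (spinPath n ε l' (y 1)) n).1 ∧
        0 < (pt (spinPath n ε l (y 0)) n).2 - (pt (spinPath n ε l' (y 1)) n).2 ↔
      StrictAnti fun c => key n (y c) n := by
    rw [pt_spinPath le_rfl, pt_spinPath le_rfl, sub_pos, h'.spinPt_lt_iff h0 h1 h, spinPt, spinPt,
      col_self, col_self, and_iff_right rfl, Fin.strictAnti_iff_succ_lt, Fin.forall_fin_one]
    rfl
  rw [pathsB, if_neg hi.ne]
  constructor
  · rintro ⟨a, b, ha, hb, rfl, h⟩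
    obtain ⟨y, hy, rfl⟩ := exists_eq_spinPath hn ha
    obtain ⟨z, hz, rfl⟩ := exists_eq_spinPath hn hb
    exact ⟨![y, z], ⟨Fin.forall_fin_two.2 ⟨hy, hz⟩, (hanti (y := ![y, z]) hy hz).1 h⟩, rfl⟩
  · rintro ⟨y, hy, rfl⟩
    have h := hy.profile (0 : Fin 2)
    have h' := hy.profile (1 : Fin 2)
    exact ⟨_, _, spinPath_mem_pathsBspin (by omega) h, spinPath_mem_pathsBspin (by omega) h', rfl,
      (hanti h h').2 hy.anti⟩

theorem exists_shape (hn : 2 ≤ n) (h0 : 0 < ε) (h1 : ε < 1 / 2) {x : ℕ × ℤ}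
    (hx : x ∈ X (.B n ε)) :
    ∃ F : Shape n ε, ∀ p, p ∈ pathsB n ε x.1 x.2 ↔ ∃ y, IsFamily F y ∧ p = F.path y := by
  obtain ⟨i, k⟩ := x
  obtain ⟨hi, hk⟩ | ⟨-, hi, hk⟩ := hx
  · refine ⟨spinShape n ε k hk, fun _ => ?_⟩
    dsimp only at hi ⊢
    rw [hi]
    exact mem_pathsB_last_iff hn hk
  · exact ⟨pairShape n ε i k hk, fun _ => mem_pathsB_iff_of_lt hn h0 h1 hi hk⟩

/-- The model of type `B_n`. -/
noncomputable def model (hn : 2 ≤ n) (h0 : 0 < ε) (h1 : ε < 1 / 2) : PathModel (.B n ε) where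
  onLine := OnLine n ε
  toA := toA n
  fst_eq_of_onLine := OnLine.fst_eq
  toA_Y _ hx := toA_Y hn hx
  eq_zero_of_toA_eq_zero _ hv hsupp h := eq_zero_of_toA_eq_zero hn hv hsupp h
  mon_eq _ hx p hp := by
    obtain ⟨F, hF⟩ := exists_shape hn h0 h1 hx
    obtain ⟨y, hy, rfl⟩ := (hF p).1 hp
    exact F.mon_path hn h0 h1 hy
  height_lower _ hx _ hw p q h := by
    obtain ⟨F, hF⟩ := exists_shape hn h0 h1 hx
    obtain ⟨y, hy, rfl⟩ := (hF p).1 h.1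
    obtain ⟨z, hz, rfl⟩ := (hF q).1 h.2.1
    exact F.height_of_loweredTo hn h0 h1 hy hz hw h
  length_eq _ hx p hp q hq := by
    obtain ⟨F, hF⟩ := exists_shape hn h0 h1 hx
    obtain ⟨y, -, rfl⟩ := (hF p).1 hp
    obtain ⟨z, -, rfl⟩ := (hF q).1 hq
    rw [F.length_path, F.length_path]
  pt_fst_eq _ hx p hp q hq := by
    obtain ⟨F, hF⟩ := exists_shape hn h0 h1 hx
    obtain ⟨y, -, rfl⟩ := (hF p).1 hp
    obtain ⟨z, -, rfl⟩ := (hF q).1 hq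
    exact F.pt_fst_eq y z
  onLine_pt _ hx p hp q hq := by
    obtain ⟨F, hF⟩ := exists_shape hn h0 h1 hx
    obtain ⟨y, hy, rfl⟩ := (hF p).1 hp
    obtain ⟨z, hz, rfl⟩ := (hF q).1 hq
    exact F.onLine_pt hn h0 h1 hy hz
  pt_eq_of_notMem_W _ hx p hp q hq := by
    obtain ⟨F, hF⟩ := exists_shape hn h0 h1 hx
    obtain ⟨y, hy, rfl⟩ := (hF p).1 hp
    obtain ⟨z, hz, rfl⟩ := (hF q).1 hq
    exact F.pt_eq_of_notMem_W hn h0 h1 hy hz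
  weaklyAbove_of_height_le _ hx p hp q hq h := by
    obtain ⟨F, hF⟩ := exists_shape hn h0 h1 hx
    obtain ⟨y, hy, rfl⟩ := (hF p).1 hp
    obtain ⟨z, hz, rfl⟩ := (hF q).1 hq
    exact F.weaklyAbove_of_height_le hn h0 h1 hy hz h
  exists_lower _ hx p hp q hq hle hne := by
    obtain ⟨F, hF⟩ := exists_shape hn h0 h1 hx
    obtain ⟨y, hy, rfl⟩ := (hF p).1 hp
    obtain ⟨z, hz, rfl⟩ := (hF q).1 hq
    exact F.exists_lower hn h0 h1 hF hy hz hle hne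

end Model

end TypeB

theorem stmt10_general (S : Setting) (hS : S.valid) {T : ℕ} {w : Fin T → ℕ × ℤ}
    (hw : ∀ t, w t ∈ X S) {R : ℕ} {jl : Fin R → ℕ × ℤ} (hjl : ∀ r, jl r ∈ W S)
    {ps ps' : Fin T → List (ℝ × ℝ)} (hps : ps ∈ PBar S w) (hps' : ps' ∈ PBar S w) :
    tmon S ps' = tmon S ps - ∑ r, Amon S (jl r).1 (jl r).2 ↔
      ∃ σ : Equiv.Perm (Fin R), TLowerSeq S w ps ps' (List.ofFn fun r => jl (σ r)) := by
  cases S with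
  | A n => exact (TypeA.model n).tmon_eq_iff_exists_lowerSeq hw hps hps' hjl
  | B n ε =>
    obtain ⟨hn, h0, h1⟩ := hS
    exact (TypeB.model hn h0 h1).tmon_eq_iff_exists_lowerSeq hw hps hps' hjl

/-- for non-overlapping tuples `(p_t), (p'_t) ∈ 𝒫̄` and points
`(j_r,ℓ_r) ∈ W`, `1 ≤ r ≤ R`, the following are equivalent: (i)
`∏ m(p'_t) = ∏ m(p_t) ⋅ ∏_r A_{j_r,ℓ_r}⁻¹`; (ii) for some permutation `σ` of `{1,…,R}`,
the lowering moves at `(j_{σ(1)},ℓ_{σ(1)}), …, (j_{σ(R)},ℓ_{σ(R)})`, performed in this order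
starting from `(p_t)`, are all defined, keep the tuples non-overlapping, and end
at `(p'_t)`. -/
theorem stmt10 (S : Setting) (hS : S.valid) {T : ℕ} (hT : 1 ≤ T)
    (w : Fin T → ℕ × ℤ) (hw : IsSnake S w)
    (R : ℕ) (jl : Fin R → ℕ × ℤ) (hjl : ∀ r, jl r ∈ W S)
    (ps ps' : Fin T → List (ℝ × ℝ)) (hps : ps ∈ PBar S w) (hps' : ps' ∈ PBar S w) :
    (tmon S ps' = tmon S ps - ∑ r, Amon S (jl r).1 (jl r).2) ↔
    (∃ σ : Equiv.Perm (Fin R),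
      TLowerSeq S w ps ps' (List.ofFn fun r => jl (σ r))) :=
  stmt10_general S hS hw.1 hjl hps hps'

end Paper
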